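/- arXiv:2604.14681 — 6 statements merged into one kernel-verified Lean document; each statement's English description precedes it below -/
import Mathlib

section
/- The star-exponential satisfies the exponent rule: for all configuration functionals Ψ, Φ ∈ A₀ one has exp∗ Ψ ∗ exp∗ Φ = exp∗ (Ψ + Φ), where the sum Ψ + Φ is taken componentwise. -/
open MeasureTheory Finset

abbrev CF (E : Type) : Type := (n : ℕ) → (Fin n → E) → ℝ

namespace CF

variable {E : Type}

/-- Symmetry of a configuration functional under permutations of the arguments. -/
def IsSymm (F : CF E) : Prop :=
  ∀ (n : ℕ) (σ : Equiv.Perm (Fin n)) (x : Fin n → E), F n (x ∘ σ) = F n x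

/-- The subtuple of `x` with indices in `I`, listed in increasing order. -/
noncomputable def sub {n : ℕ} (x : Fin n → E) (I : Finset (Fin n)) : Fin I.card → E :=
  fun i => x (I.orderIsoOfFin rfl i).1

/-- The convolution `Ψ ∗ Φ`. -/
noncomputable def conv (Ψ Φ : CF E) : CF E :=
  fun n x => ∑ I : Finset (Fin n), Ψ I.card (sub x I) * Φ Iᶜ.card (sub x Iᶜ)

/-- The unit `𝟙`. -/
def unit : CF E := fun n _ => if n = 0 then 1 else 0

/-- Star-powers `Φ^{∗m}`. -/
noncomputable def starPow (Φ : CF E) : ℕ → CF E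
  | 0 => unit
  | m + 1 => conv Φ (starPow Φ m)

/-- The star-exponential `exp∗ Φ = 𝟙 + Σ_{m≥1} Φ^{∗m}/m!`; on `A₀` the sum in the
`n`-th component is finite since `(Φ^{∗m})^{(n)} = 0` for `m > n`. -/
noncomputable def starExp (Φ : CF E) : CF E :=
  fun n x => ∑ m ∈ Finset.range (n + 1), ((m.factorial : ℝ))⁻¹ * starPow Φ m n x

/-- The derivative `D_x`. -/
noncomputable def D (x : E) (Φ : CF E) : CF E := fun n y => Φ (n + 1) (Fin.cons x y)

/-- The second derivative `D_{x₁,x₂} = D_{x₁} ∘ D_{x₂}`. -/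
noncomputable def D2 (x₁ x₂ : E) (Φ : CF E) : CF E := D x₁ (D x₂ Φ)

end CF

namespace CFaux

open CF

/-- Set functions. -/
def SF (α : Type) : Type := Finset α → ℝ

variable {α : Type} [DecidableEq α]

noncomputable instance : AddCommGroup (SF α) := inferInstanceAs (AddCommGroup (Finset α → ℝ))
noncomputable instance : Module ℚ (SF α) := inferInstanceAs (Module ℚ (Finset α → ℝ))

noncomputable instance : Mul (SF α) :=
  ⟨fun f g S => ∑ T ∈ S.powerset, f T * g (S \ T)⟩

noncomputable instance : One (SF α) := ⟨fun S => if S = ∅ then 1 else 0⟩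

theorem mul_app (f g : SF α) (S : Finset α) :
    (f * g) S = ∑ T ∈ S.powerset, f T * g (S \ T) := rfl
theorem one_app (S : Finset α) : (1 : SF α) S = if S = ∅ then 1 else 0 := rfl
theorem add_app (f g : SF α) (S : Finset α) : (f + g) S = f S + g S := rfl
theorem zero_app (S : Finset α) : (0 : SF α) S = 0 := rfl
theorem smul_app (q : ℚ) (f : SF α) (S : Finset α) : (q • f) S = q • f S := rfl

theorem mulcomm (f g : SF α) : f * g = g * f := by
  funext S
  rw [mul_app, mul_app]
  refine Finset.sum_bij' (fun T _ => S \ T) (fun T _ => S \ T) ?_ ?_ ?_ ?_ ?_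
  · intro T hT; simp
  · intro T hT; simp
  · intro T hT; simp at hT; simp [hT]
  · intro T hT; simp at hT; simp [hT]
  · intro T hT; simp at hT; simp [hT, mul_comm]

theorem mulassoc (f g h : SF α) : f * g * h = f * (g * h) := by
  funext S
  simp only [mul_app, Finset.sum_mul, Finset.mul_sum]
  rw [Finset.sum_sigma', Finset.sum_sigma']
  refine Finset.sum_bij' (fun p _ => ⟨p.2, p.1 \ p.2⟩) (fun p _ => ⟨p.1 ∪ p.2, p.1⟩) ?_ ?_ ?_ ?_ ?_
  · rintro ⟨T, U⟩ h; simp at h ⊢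
    exact ⟨h.2.trans h.1, h.1.trans Finset.subset_union_right⟩
  · rintro ⟨T, U⟩ h
    simp only [Finset.mem_sigma, Finset.mem_powerset] at h ⊢
    refine ⟨?_, Finset.subset_union_left⟩
    exact Finset.union_subset h.1 (h.2.trans Finset.sdiff_subset)
  · rintro ⟨T, U⟩ h; simp at h ⊢
    exact h.2
  · rintro ⟨T, U⟩ h; simp at h ⊢
    rw [Finset.union_sdiff_left, Finset.sdiff_eq_self_iff_disjoint]
    exact Finset.disjoint_of_subset_left h.2 Finset.sdiff_disjoint
  · rintro ⟨T, U⟩ h; simp at h ⊢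
    rw [Finset.sdiff_sdiff_left', ← Finset.sdiff_union_distrib, Finset.union_sdiff_of_subset h.2,
      mul_assoc]

theorem onemul (f : SF α) : 1 * f = f := by
  funext S
  rw [mul_app, Finset.sum_eq_single ∅]
  · simp [one_app]
  · intro T _ h; simp [one_app, h]
  · simp

noncomputable instance : CommRing (SF α) :=
  { (inferInstance : AddCommGroup (SF α)) with
    mul := (· * ·)
    one := 1
    mul_assoc := mulassoc
    mul_comm := mulcomm
    one_mul := onemul
    mul_one := fun f => by rw [mulcomm, onemul]
    zero_mul := fun f => by funext S; simp [mul_app, zero_app]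
    mul_zero := fun f => by funext S; simp [mul_app, zero_app]
    left_distrib := fun f g h => by
      funext S; simp [mul_app, add_app, mul_add, Finset.sum_add_distrib]
    right_distrib := fun f g h => by
      funext S; simp [mul_app, add_app, add_mul, Finset.sum_add_distrib] }

noncomputable instance : Algebra ℚ (SF α) :=
  Algebra.ofModule
    (fun q f g => by
      funext S; simp only [mul_app, smul_app, Finset.smul_sum, smul_mul_assoc])
    (fun q f g => by
      funext S; simp only [mul_app, smul_app, Finset.smul_sum, mul_smul_comm])

theorem pow_zero_of_card (f : SF α) (hf : f ∅ = 0) (m : ℕ) :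
    ∀ S : Finset α, S.card < m → (f ^ m) S = 0 := by
  induction m with
  | zero => intro S h; omega
  | succ m ih =>
    intro S h
    rw [pow_succ', mul_app]
    refine Finset.sum_eq_zero fun T hT => ?_
    rcases Finset.eq_empty_or_nonempty T with rfl | hne
    · simp [hf]
    · rw [ih, mul_zero]
      have := Finset.card_sdiff_add_card_eq_card (Finset.mem_powerset.1 hT)
      have := hne.card_pos
      omega

theorem sum_app {ι : Type} (s : Finset ι) (f : ι → SF α) (S : Finset α) :
    (∑ i ∈ s, f i) S = ∑ i ∈ s, f i S :=
  Finset.sum_apply (M := fun _ : Finset α => ℝ) S s f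

variable {E : Type} {n : ℕ}

noncomputable def toSF (x : Fin n → E) (F : CF E) : SF (Fin n) := fun S => F S.card (sub x S)

theorem F_eq (F : CF E) (x : Fin n → E) (I : Finset (Fin n)) (k : ℕ) (e : Fin k → Fin n)
    (he : StrictMono e) (hI : Finset.univ.image e = I) :
    F k (x ∘ e) = toSF x F I := by
  have hk : I.card = k := by
    rw [← hI, Finset.card_image_of_injective _ he.injective]; simp
  subst hk
  have := Finset.orderEmbOfFin_unique (s := I) rfl (f := e)
    (fun i => by rw [← hI]; simp) he
  rw [this]; rfl

theorem toSF_sub (F : CF E) (x : Fin n → E) (S : Finset (Fin n)) (J : Finset (Fin S.card)) :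
    F J.card (sub (sub x S) J) = toSF x F (J.map (S.orderEmbOfFin rfl).toEmbedding) := by
  refine F_eq F x _ _ (S.orderEmbOfFin rfl ∘ J.orderEmbOfFin rfl)
    ((S.orderEmbOfFin rfl).strictMono.comp (J.orderEmbOfFin rfl).strictMono) ?_
  rw [← Finset.image_image, Finset.map_eq_image]
  congr 1
  simp

theorem toSF_conv (x : Fin n → E) (F G : CF E) : toSF x (conv F G) = toSF x F * toSF x G := by
  funext S
  rw [mul_app]
  change ∑ I : Finset (Fin S.card), _ = _
  simp only [toSF_sub]
  have hS : (Finset.univ : Finset (Fin S.card)).map (S.orderEmbOfFin rfl).toEmbedding = S := by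
    simp
  refine Finset.sum_bij (fun J _ => J.map (S.orderEmbOfFin rfl).toEmbedding) ?_ ?_ ?_ ?_
  · intro J _
    rw [Finset.mem_powerset]
    conv_rhs => rw [← hS]
    exact Finset.map_subset_map.2 (Finset.subset_univ _)
  · intro J _ K _ h
    exact Finset.map_injective _ h
  · intro T hT
    rw [Finset.mem_powerset, ← hS, Finset.subset_map_iff] at hT
    obtain ⟨u, -, hu⟩ := hT
    exact ⟨u, Finset.mem_univ _, hu.symm⟩
  · intro J _
    congr 2
    rw [Finset.compl_eq_univ_sdiff, Finset.map_sdiff, hS]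

theorem toSF_univ (x : Fin n → E) (F : CF E) : toSF x F Finset.univ = F n x :=
  (F_eq F x _ n id strictMono_id (by simp)).symm

theorem toSF_pow (x : Fin n → E) (F : CF E) (m : ℕ) : toSF x (starPow F m) = toSF x F ^ m := by
  induction m with
  | zero => funext S; simp [toSF, starPow, CF.unit, one_app]
  | succ m ih => rw [pow_succ', ← ih, ← toSF_conv]; rfl

theorem toSF_empty (x : Fin n → E) (F : CF E) (h : F 0 = 0) : toSF x F ∅ = 0 :=
  congrFun h _

theorem toSF_nil (x : Fin n → E) (F : CF E) (h : F 0 = 0) : toSF x F ^ (n + 1) = 0 := by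
  funext S
  refine pow_zero_of_card _ (toSF_empty x F h) _ _ ?_
  have := Finset.card_le_univ S
  simp at this
  omega

theorem toSF_exp (x : Fin n → E) (F : CF E) (h : F 0 = 0) :
    toSF x (starExp F) = IsNilpotent.exp (toSF x F) := by
  rw [IsNilpotent.exp_eq_sum (toSF_nil x F h)]
  funext S
  rw [sum_app]
  have hc : S.card ≤ n := by
    have := Finset.card_le_univ S
    simpa using this
  rw [← Finset.sum_subset (Finset.range_subset_range.2 (Nat.succ_le_succ hc))]
  · change ∑ m ∈ Finset.range (S.card + 1), _ = _
    refine Finset.sum_congr rfl fun m _ => ?_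
    rw [smul_app, ← toSF_pow, Rat.smul_def]
    push_cast
    rfl
  · intro m _ hm
    rw [smul_app, pow_zero_of_card _ (toSF_empty x F h), smul_zero]
    simpa using hm

end CFaux

open CF in
/-- the exponent rule `exp∗ Ψ ∗ exp∗ Φ = exp∗ (Ψ + Φ)` on `A₀`. -/
theorem starExp_conv_starExp (E : Type) (Ψ Φ : CF E)
    (hΨ0 : Ψ 0 = 0) (hΨsymm : IsSymm Ψ) (hΦ0 : Φ 0 = 0) (hΦsymm : IsSymm Φ) :
    conv (starExp Ψ) (starExp Φ) = starExp (Ψ + Φ) := by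
  funext n x
  rw [← CFaux.toSF_univ x (conv (starExp Ψ) (starExp Φ)), ← CFaux.toSF_univ x (starExp (Ψ + Φ)), CFaux.toSF_conv,
    CFaux.toSF_exp x Ψ hΨ0, CFaux.toSF_exp x Φ hΦ0,
    CFaux.toSF_exp x (Ψ + Φ) (by rw [Pi.add_apply, hΨ0, hΦ0, add_zero]),
    ← IsNilpotent.exp_add_of_commute (Commute.all _ _) ⟨_, CFaux.toSF_nil x Ψ hΨ0⟩
      ⟨_, CFaux.toSF_nil x Φ hΦ0⟩]
  rfl
end

section
/- The star-exponential exp∗ is a bijection from A₀ onto the set of configuration functionals Ψ with Ψ^{(0)} = 1: for every configuration functional Ψ with Ψ^{(0)} = 1 there exists a unique Φ ∈ A₀ such that exp∗ Φ = Ψ. -/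
open MeasureTheory Finset

namespace CF

variable {E : Type}

theorem symm_cast {F : CF E} (hF : IsSymm F) {k l : ℕ} (e : Fin k ≃ Fin l)
    (a : Fin k → E) (b : Fin l → E) (h : ∀ i, a i = b (e i)) : F k a = F l b := by
  have hkl : k = l := by simpa using Fintype.card_congr e
  subst hkl
  rw [← hF k e b]
  congr 1
  funext i
  exact h i

theorem sub_map_symm {F : CF E} (hF : IsSymm F) {n : ℕ} (σ : Equiv.Perm (Fin n))
    (x : Fin n → E) (I J : Finset (Fin n)) (h : ∀ i, i ∈ I ↔ σ i ∈ J) :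
    F I.card (sub (x ∘ σ) I) = F J.card (sub x J) := by
  refine symm_cast hF (((I.orderIsoOfFin rfl).toEquiv.trans
    (σ.subtypeEquiv h)).trans (J.orderIsoOfFin rfl).toEquiv.symm) _ _ ?_
  intro i
  simp [sub]

theorem conv_symm {F G : CF E} (hF : IsSymm F) (hG : IsSymm G) : IsSymm (conv F G) := by
  intro n σ x
  unfold conv
  refine Fintype.sum_equiv σ.finsetCongr _ _ ?_
  intro I
  have h : ∀ i, i ∈ I ↔ σ i ∈ σ.finsetCongr I := by
    intro i; simp
  rw [sub_map_symm hF σ x I _ h, sub_map_symm hG σ x Iᶜ (σ.finsetCongr I)ᶜ]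
  intro i
  rw [mem_compl, mem_compl, h]

theorem unit_symm : IsSymm (unit : CF E) := fun _ _ _ => rfl

theorem starPow_symm {F : CF E} (hF : IsSymm F) (m : ℕ) : IsSymm (starPow F m) := by
  induction m with
  | zero => exact unit_symm
  | succ m ih => exact conv_symm hF ih

theorem starPow_one {F : CF E} (hF : IsSymm F) (n : ℕ) (x : Fin n → E) :
    starPow F 1 n x = F n x := by
  change conv F unit n x = _
  unfold conv
  rw [Finset.sum_eq_single Finset.univ]
  · have h1 : F (univ : Finset (Fin n)).card (sub x univ) = F n x := by
      refine symm_cast hF ((univ.orderIsoOfFin rfl).toEquiv.trans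
        (Equiv.subtypeUnivEquiv (by simp))) _ _ ?_
      intro i
      rfl
    rw [h1]
    simp [unit]
  · intro I _ hI
    have : Iᶜ.card ≠ 0 := by
      simpa [Finset.card_eq_zero] using hI
    simp [unit, this]
  · simp

theorem starPow_zero {F : CF E} (h0 : F 0 = 0) (m : ℕ) : starPow F (m + 1) 0 = 0 := by
  funext x
  change conv F _ 0 x = 0
  unfold conv
  refine Finset.sum_eq_zero fun I _ => ?_
  have : ∀ k, k = 0 → ∀ y, F k y = 0 := by rintro k rfl y; simp [h0]
  rw [this _ (by simpa using card_le_univ I), zero_mul]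

theorem starPow_congr {F G : CF E} {n : ℕ} (h : ∀ k < n, F k = G k) (m : ℕ) :
    ∀ k < n, starPow F m k = starPow G m k := by
  induction m with
  | zero => intro k _; rfl
  | succ m ih =>
    intro k hk
    funext x
    change conv F _ k x = conv G _ k x
    unfold conv
    refine Finset.sum_congr rfl fun I _ => ?_
    have h1 : I.card ≤ k := by simpa using card_le_univ I
    have h2 : Iᶜ.card ≤ k := by simpa using card_le_univ Iᶜ
    rw [h _ (by omega), ih _ (by omega)]

theorem starPow_congr2 {F G : CF E} {n : ℕ} (hF : F 0 = 0) (hG : G 0 = 0)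
    (h : ∀ k < n, F k = G k) (m : ℕ) :
    starPow F (m + 2) n = starPow G (m + 2) n := by
  funext x
  change conv F (starPow F (m + 1)) n x = conv G (starPow G (m + 1)) n x
  unfold conv
  refine Finset.sum_congr rfl fun I _ => ?_
  have hs : I.card + Iᶜ.card = n := by simpa using card_add_card_compl I
  have z : ∀ {H : CF E}, H 0 = 0 → ∀ k, k = 0 → ∀ y, H k y = 0 := by
    rintro H hH k rfl y; simp [hH]
  by_cases h1 : I.card = 0
  · rw [z hF _ h1, z hG _ h1]; simp
  by_cases h2 : Iᶜ.card = 0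
  · rw [z (starPow_zero hF m) _ h2, z (starPow_zero hG m) _ h2]; simp
  rw [h _ (by omega), starPow_congr h (m + 1) _ (by omega)]

/-- The non-linear part of the exponential. -/
noncomputable def rem (F : CF E) : CF E := fun n x =>
  ∑ m ∈ Finset.range n, (((m + 1).factorial : ℝ))⁻¹ * (if m = 0 then 0 else starPow F (m + 1) n x)

theorem rem_congr {F G : CF E} {n : ℕ} (hF : F 0 = 0) (hG : G 0 = 0)
    (h : ∀ k < n, F k = G k) : rem F n = rem G n := by
  funext x
  unfold rem
  refine Finset.sum_congr rfl fun m _ => ?_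
  cases m with
  | zero => simp
  | succ m => rw [starPow_congr2 hF hG h]

theorem rem_symm {F : CF E} (hF : IsSymm F) : IsSymm (rem F) := by
  intro n σ x
  unfold rem
  refine Finset.sum_congr rfl fun m _ => ?_
  rw [starPow_symm hF (m + 1) n σ x]

theorem starExp_zero (F : CF E) : starExp F 0 = 1 := by
  funext x; simp [starExp, starPow, unit]

theorem starExp_succ {F : CF E} (hF : IsSymm F) (n : ℕ) (x : Fin (n + 1) → E) :
    starExp F (n + 1) x = F (n + 1) x + rem F (n + 1) x := by
  unfold starExp rem
  rw [Finset.sum_range_succ', Finset.sum_range_succ', Finset.sum_range_succ' _ n]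
  simp [starPow_one hF, starPow.eq_1, unit]
  ring

/-- One step of the iteration. -/
noncomputable def step (Ψ F : CF E) : CF E := fun n x =>
  if n = 0 then 0 else Ψ n x - rem F n x

/-- The iterates. -/
noncomputable def iter (Ψ : CF E) : ℕ → CF E
  | 0 => fun _ _ => 0
  | N + 1 => step Ψ (iter Ψ N)

theorem iter_zero (Ψ : CF E) (N : ℕ) : iter Ψ N 0 = 0 := by
  cases N with
  | zero => rfl
  | succ N => funext x; simp [iter, step]

theorem iter_symm {Ψ : CF E} (h : IsSymm Ψ) (N : ℕ) : IsSymm (iter Ψ N) := by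
  induction N with
  | zero => intro n σ x; rfl
  | succ N ih =>
    intro n σ x
    simp only [iter, step]
    rw [h n σ x, rem_symm ih n σ x]

theorem iter_stable (Ψ : CF E) (n : ℕ) : ∀ N, n ≤ N → iter Ψ N n = iter Ψ n n := by
  induction n using Nat.strong_induction_on with
  | _ n ih =>
    intro N hN
    rcases n with _ | n
    · rw [iter_zero, iter_zero]
    obtain ⟨N, rfl⟩ : ∃ M, N = M + 1 := ⟨N - 1, by omega⟩
    have : rem (iter Ψ N) (n + 1) = rem (iter Ψ n) (n + 1) := by
      refine rem_congr (iter_zero _ _) (iter_zero _ _) fun k hk => ?_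
      rw [ih k hk N (by omega), ih k hk n (by omega)]
    funext x
    simp [iter, step, this]

end CF

open CF in
/-- `exp∗` is a bijection from `A₀` onto the configuration functionals
with `0`-component equal to `1`. -/
theorem starExp_bijective (E : Type) (Ψ : CF E) (hΨ0 : Ψ 0 = 1) (hΨsymm : IsSymm Ψ) :
    ∃! Φ : CF E, Φ 0 = 0 ∧ IsSymm Φ ∧ starExp Φ = Ψ := by
  refine ⟨fun n => iter Ψ n n, ⟨iter_zero Ψ 0, fun n => iter_symm hΨsymm n n, ?_⟩, ?_⟩
  · have hs : IsSymm (fun n => iter Ψ n n) := fun n => iter_symm hΨsymm n n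
    funext n x
    cases n with
    | zero => rw [starExp_zero, hΨ0]
    | succ n =>
      rw [starExp_succ hs]
      have : rem (fun n => iter Ψ n n) (n + 1) = rem (iter Ψ n) (n + 1) := by
        refine rem_congr (iter_zero _ _) (iter_zero _ _) fun k hk => ?_
        rw [iter_stable Ψ k n (by omega)]
      rw [this]
      simp [iter, step]
  · rintro G ⟨hG0, hGs, hG⟩
    have hs : IsSymm (fun n => iter Ψ n n) := fun n => iter_symm hΨsymm n n
    funext n
    induction n using Nat.strong_induction_on with
    | _ n ih =>
      rcases n with _ | n
      · rw [hG0, iter_zero]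
      funext x
      have h1 := starExp_succ hGs n x
      have h2 : rem G (n + 1) = rem (iter Ψ n) (n + 1) := by
        refine rem_congr hG0 (iter_zero _ _) fun k hk => ?_
        rw [ih k hk, iter_stable Ψ k n (by omega)]
      rw [hG, h2] at h1
      simp [iter, step, h1]
end

section
/- The derivative operator satisfies the chain rule with respect to the star-exponential: for every x ∈ E and every configuration functional Ψ ∈ A₀ one has D_x(exp∗ Ψ) = (exp∗ Ψ) ∗ (D_x Ψ). -/
open MeasureTheory Finset

namespace CF

variable {E : Type}

theorem ev_eq (F : CF E) {n k : ℕ} (x : Fin n → E) (I : Finset (Fin n)) (f : Fin k → Fin n)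
    (hf : StrictMono f) (hI : Finset.univ.image f = I) :
    F I.card (sub x I) = F k (x ∘ f) := by
  have hk : I.card = k := by
    rw [← hI, Finset.card_image_of_injective _ hf.injective]; simp
  subst hk
  congr 1
  funext i
  have := Finset.orderEmbOfFin_unique (s := I) rfl (f := f)
    (fun i => by rw [← hI]; exact Finset.mem_image_of_mem _ (Finset.mem_univ i)) hf
  simp only [sub, Function.comp]
  rw [this]
  rfl

theorem ev_succ (F : CF E) {n : ℕ} (a : E) (y : Fin n → E) (I : Finset (Fin n)) :
    F (I.map (Fin.succEmb n)).card (sub (Fin.cons a y) (I.map (Fin.succEmb n)))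
      = F I.card (sub y I) := by
  rw [ev_eq F (k := I.card) _ _ (fun i => Fin.succ (I.orderEmbOfFin rfl i))]
  · rfl
  · intro i j h
    simpa using h
  · ext j
    have := I.range_orderEmbOfFin rfl
    simp only [Finset.mem_image, Finset.mem_univ, true_and, Finset.mem_map, Fin.coe_succEmb]
    constructor
    · rintro ⟨i, rfl⟩
      exact ⟨_, I.orderEmbOfFin_mem rfl i, rfl⟩
    · rintro ⟨b, hb, rfl⟩
      have hb' : b ∈ Set.range (I.orderEmbOfFin rfl) := by rw [this]; exact hb
      obtain ⟨i, rfl⟩ := hb'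
      exact ⟨i, rfl⟩

theorem ev_insert (F : CF E) {n : ℕ} (a : E) (y : Fin n → E) (I : Finset (Fin n)) :
    F (insert 0 (I.map (Fin.succEmb n))).card (sub (Fin.cons a y) (insert 0 (I.map (Fin.succEmb n))))
      = D a F I.card (sub y I) := by
  rw [ev_eq F (k := I.card + 1) _ _ (Fin.cons 0 (fun i => Fin.succ (I.orderEmbOfFin rfl i)))]
  · unfold D
    congr 1
    funext i
    refine Fin.cases ?_ (fun i => ?_) i
    · rfl
    · rfl
  · intro i j h
    induction i using Fin.cases with
    | zero =>
      induction j using Fin.cases with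
      | zero => simp at h
      | succ j => simp
    | succ i =>
      induction j using Fin.cases with
      | zero => simp at h
      | succ j => simpa using h
  · ext j
    have := I.range_orderEmbOfFin rfl
    simp only [Finset.mem_image, Finset.mem_univ, true_and, Finset.mem_map, Fin.coe_succEmb,
      Finset.mem_insert, Fin.exists_fin_succ, Fin.cons_zero, Fin.cons_succ]
    refine or_congr eq_comm ?_
    constructor
    · rintro ⟨i, rfl⟩
      exact ⟨_, I.orderEmbOfFin_mem rfl i, rfl⟩
    · rintro ⟨b, hb, rfl⟩
      have hb' : b ∈ Set.range (I.orderEmbOfFin rfl) := by rw [this]; exact hb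
      obtain ⟨i, rfl⟩ := hb'
      exact ⟨i, rfl⟩

theorem sum_finset_succ {n : ℕ} (g : Finset (Fin (n+1)) → ℝ) :
    ∑ I, g I = ∑ I : Finset (Fin n), g (insert 0 (I.map (Fin.succEmb n)))
      + ∑ I : Finset (Fin n), g (I.map (Fin.succEmb n)) := by
  classical
  have hu : (Finset.univ : Finset (Finset (Fin (n+1)))) =
      (insert 0 ((Finset.univ : Finset (Fin n)).map (Fin.succEmb n))).powerset := by
    ext s
    simp only [Finset.mem_univ, Finset.mem_powerset, true_iff]
    intro j _
    induction j using Fin.cases <;> simp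
  rw [hu, Finset.sum_powerset_insert (by simp), add_comm]
  have him : ((Finset.univ : Finset (Fin n)).map (Fin.succEmb n)).powerset =
      (Finset.univ : Finset (Finset (Fin n))).image (fun I => I.map (Fin.succEmb n)) := by
    ext s
    simp only [Finset.mem_powerset, Finset.subset_map_iff, Finset.mem_image, Finset.mem_univ,
      true_and, Finset.subset_univ]
    exact ⟨fun ⟨t, h⟩ => ⟨t, h.symm⟩, fun ⟨t, h⟩ => ⟨t, h.symm⟩⟩
  rw [him, Finset.sum_image, Finset.sum_image]
  · exact fun a _ b _ h => Finset.map_injective _ h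
  · exact fun a _ b _ h => Finset.map_injective _ h

theorem compl_ins {n : ℕ} (I : Finset (Fin n)) :
    (insert 0 (I.map (Fin.succEmb n)))ᶜ = Iᶜ.map (Fin.succEmb n) := by
  ext j
  induction j using Fin.cases <;> simp [Fin.succ_ne_zero]

theorem compl_map {n : ℕ} (I : Finset (Fin n)) :
    (I.map (Fin.succEmb n))ᶜ = insert 0 (Iᶜ.map (Fin.succEmb n)) := by
  rw [← compl_compl (insert 0 _), compl_ins, compl_compl]

theorem leib (a : E) (F G : CF E) :
    D a (conv F G) = conv (D a F) G + conv F (D a G) := by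
  funext n y
  show conv F G (n+1) (Fin.cons a y) = conv (D a F) G n y + conv F (D a G) n y
  unfold conv
  rw [sum_finset_succ]
  congr 1 <;> refine Finset.sum_congr rfl fun I _ => ?_
  · rw [ev_insert F, compl_ins, ev_succ G]
  · rw [ev_succ F, compl_map, ev_insert G]

theorem conv_zero (F G : CF E) (x : Fin 0 → E) : conv F G 0 x = F 0 x * G 0 x := by
  have h : ∀ F : CF E, F (∅ : Finset (Fin 0)).card (sub x ∅) = F 0 x := fun F => by
    rw [ev_eq F x ∅ (id : Fin 0 → Fin 0) strictMono_id (by simp)]; rfl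
  unfold conv
  rw [Fintype.sum_unique]
  have h1 : (default : Finset (Fin 0)) = ∅ := Subsingleton.elim _ _
  have h2 : (∅ : Finset (Fin 0))ᶜ = ∅ := Subsingleton.elim _ _
  rw [h1, h2, h F, h G]

theorem conv_succ (F G : CF E) {n : ℕ} (x : Fin (n+1) → E) :
    conv F G (n+1) x = conv (D (x 0) F) G n (Fin.tail x) + conv F (D (x 0) G) n (Fin.tail x) := by
  have := congrFun (congrFun (leib (x 0) F G) n) (Fin.tail x)
  simpa [D] using this

theorem add_conv (F G H : CF E) : conv (F + G) H = conv F H + conv G H := by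
  funext n x
  simp [conv, add_mul, Finset.sum_add_distrib]

theorem conv_add (F G H : CF E) : conv F (G + H) = conv F G + conv F H := by
  funext n x
  simp [conv, mul_add, Finset.sum_add_distrib]

theorem conv_smul (c : ℝ) (F G : CF E) : conv F (c • G) = c • conv F G := by
  funext n x
  simp only [conv, Pi.smul_apply, smul_eq_mul, Finset.mul_sum]
  exact Finset.sum_congr rfl fun _ _ => by ring

theorem conv_comm (F G : CF E) : conv F G = conv G F := by
  funext n
  induction n generalizing F G with
  | zero => funext x; rw [conv_zero, conv_zero, mul_comm]
  | succ n ih => funext x; rw [conv_succ, conv_succ, ih, ih F, add_comm]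

theorem conv_assoc (F G H : CF E) : conv (conv F G) H = conv F (conv G H) := by
  funext n
  induction n generalizing F G H with
  | zero => funext x; simp only [conv_zero, mul_assoc]
  | succ n ih =>
    funext x
    rw [conv_succ, conv_succ, leib, leib, add_conv, conv_add]
    simp only [Pi.add_apply, ih]
    ring

theorem D_unit (a : E) : D a (unit : CF E) = 0 := by
  funext n y; simp [D, unit]

theorem conv_unit (F : CF E) : conv F unit = F := by
  funext n
  induction n generalizing F with
  | zero => funext x; simp [conv_zero, unit]
  | succ n ih =>
    funext x
    rw [conv_succ, D_unit, ih]
    have : conv F (0 : CF E) = 0 := by funext n x; simp [conv]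
    simp [this, D]

theorem D_pow (a : E) (Ψ : CF E) (m : ℕ) :
    D a (starPow Ψ (m+1)) = ((m : ℝ) + 1) • conv (starPow Ψ m) (D a Ψ) := by
  induction m with
  | zero =>
    simp only [starPow, conv_unit]
    rw [conv_comm, conv_unit]; simp
  | succ m ih =>
    rw [starPow, leib, ih, conv_smul, ← conv_assoc, conv_comm (D a Ψ)]
    rw [show conv Ψ (starPow Ψ m) = starPow Ψ (m+1) from rfl]
    push_cast
    rw [add_smul ((m : ℝ) + 1), one_smul, add_comm]

theorem pow_vanish (Ψ : CF E) (h0 : Ψ 0 = 0) (n : ℕ) :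
    ∀ m, n < m → ∀ x, starPow Ψ m n x = 0 := by
  induction n using Nat.strong_induction_on with
  | _ n ih =>
    intro m hm x
    obtain ⟨m, rfl⟩ : ∃ k, m = k + 1 := ⟨m - 1, by omega⟩
    cases n with
    | zero => rw [starPow, conv_zero, h0]; simp
    | succ n =>
      have := congrFun (congrFun (D_pow (x 0) Ψ m) n) (Fin.tail x)
      simp only [D, Fin.cons_self_tail] at this
      rw [this]
      simp only [Pi.smul_apply, smul_eq_mul, conv]
      rw [Finset.sum_eq_zero, mul_zero]
      intro I _
      have hI : I.card ≤ n := by simpa using Finset.card_le_univ I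
      rw [ih _ (by omega) _ (by omega), zero_mul]

end CF

open CF in
/-- the chain rule `D_x(exp∗ Ψ) = (exp∗ Ψ) ∗ (D_x Ψ)` on `A₀`. -/
theorem D_starExp (E : Type) (x : E) (Ψ : CF E) (hΨ0 : Ψ 0 = 0) (hΨsymm : IsSymm Ψ) :
    D x (starExp Ψ) = conv (starExp Ψ) (D x Ψ) := by
  funext n y
  have hL : D x (starExp Ψ) n y =
      ∑ m ∈ Finset.range (n + 1), ((m.factorial : ℝ))⁻¹ * conv (starPow Ψ m) (D x Ψ) n y := by
    show ∑ m ∈ Finset.range (n + 1 + 1), ((m.factorial : ℝ))⁻¹ *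
      starPow Ψ m (n+1) (Fin.cons x y) = _
    rw [Finset.sum_range_succ']
    have : starPow Ψ 0 (n+1) (Fin.cons x y) = 0 := by simp [starPow, unit]
    rw [this, mul_zero, add_zero]
    refine Finset.sum_congr rfl fun m _ => ?_
    have := congrFun (congrFun (D_pow x Ψ m) n) y
    simp only [D, Pi.smul_apply, smul_eq_mul] at this
    rw [this, Nat.factorial_succ]
    have h1 : (m.factorial : ℝ) ≠ 0 := by exact_mod_cast m.factorial_ne_zero
    have h2 : (m : ℝ) + 1 ≠ 0 := by positivity
    push_cast
    rw [← mul_assoc]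
    congr 1
    field_simp
  rw [hL]
  simp only [conv, Finset.mul_sum]
  rw [Finset.sum_comm]
  refine Finset.sum_congr rfl fun I _ => ?_
  have hI : I.card ≤ n := by simpa using Finset.card_le_univ I
  simp only [← mul_assoc]
  rw [← Finset.sum_mul]
  congr 1
  unfold starExp
  symm
  apply Finset.sum_subset
  · intro m; simp only [Finset.mem_range]; omega
  · intro m _ hm
    simp only [Finset.mem_range] at hm
    rw [pow_vanish Ψ hΨ0 _ _ (by omega), mul_zero]
end

section
/- (Exponential representation, Lemma 2.2.) Let d ≥ 1, let Λ ⊆ ℝ^d be a bounded measurable set, and let Φ = (Φ^{(n)})_{n≥0} ∈ A₀ be a configuration functional over E = ℝ^d with each Φ^{(n)} measurable. Suppose there are constants C > 0 and 0 < c < 1/2 such that for every n ≥ 0 and every x ∈ ℝ^d one has ∫_{Λ^n} |Φ^{(n+1)}(x,y₁,…,y_n)| dy₁…dy_n ≤ n! · C · c^n. Let Ψ = exp∗ Φ. Then the series Σ_{n≥1} (1/n!) ∫_{Λ^n} Φ^{(n)}(x₁,…,x_n) dx₁…dx_n and Σ_{n≥0} (1/n!) ∫_{Λ^n} Ψ^{(n)}(x₁,…,x_n)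 dx₁…dx_n both converge absolutely, and Σ_{n=0}^∞ (1/n!) ∫_{Λ^n} Ψ^{(n)}(x₁,…,x_n) dx₁…dx_n = exp( Σ_{n=1}^∞ (1/n!) ∫_{Λ^n} Φ^{(n)}(x₁,…,x_n) dx₁…dx_n ). -/
open MeasureTheory Finset

/-- Euclidean space `ℝ^d`. -/
abbrev Euc (d : ℕ) : Type := EuclideanSpace ℝ (Fin d)

/-- The product measure on `Λ^n ⊆ (ℝ^d)^n` (Lebesgue measure restricted to `Λ`
in each coordinate). -/
noncomputable def piRestrict (d : ℕ) (Λ : Set (Euc d)) (n : ℕ) :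
    MeasureTheory.Measure (Fin n → Euc d) :=
  MeasureTheory.Measure.pi fun _ => MeasureTheory.volume.restrict Λ

/-- Lebesgue measure on `(ℝ^d)^n`. -/
noncomputable def piVol (d : ℕ) (n : ℕ) : MeasureTheory.Measure (Fin n → Euc d) :=
  MeasureTheory.Measure.pi fun _ => MeasureTheory.volume

section Aux

open CF

variable {E : Type} [MeasurableSpace E]

theorem aux_mp (μ : Measure E) [SigmaFinite μ] {n : ℕ} (I : Finset (Fin n)) :
    MeasurePreserving (fun x : Fin n → E => (sub x I, sub x Iᶜ))
      (Measure.pi fun _ => μ)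
      ((Measure.pi fun _ : Fin I.card => μ).prod (Measure.pi fun _ : Fin Iᶜ.card => μ)) := by
  have h1 := (measurePreserving_piCongrLeft (fun _ : Fin n => μ)
    (finSumEquivOfFinset (s := I) rfl rfl)).symm
  have h2 := measurePreserving_sumPiEquivProdPi
    (fun _ : Fin I.card ⊕ Fin Iᶜ.card => μ)
  exact h2.comp h1

theorem aux_term (μ : Measure E) [SigmaFinite μ] (F G : CF E)
    (hF : ∀ n, Integrable (F n) (Measure.pi fun _ => μ))
    (hG : ∀ n, Integrable (G n) (Measure.pi fun _ => μ)) {n : ℕ} (I : Finset (Fin n)) :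
    Integrable (fun x : Fin n → E => F I.card (sub x I) * G Iᶜ.card (sub x Iᶜ))
      (Measure.pi fun _ => μ) ∧
    ∫ x : Fin n → E, F I.card (sub x I) * G Iᶜ.card (sub x Iᶜ) ∂(Measure.pi fun _ => μ) =
      (∫ x, F I.card x ∂(Measure.pi fun _ => μ)) *
      ∫ x, G Iᶜ.card x ∂(Measure.pi fun _ => μ) := by
  have hi := (hF I.card).mul_prod (hG Iᶜ.card)
  have hm := aux_mp μ I
  refine ⟨hm.integrable_comp_of_integrable hi, ?_⟩
  rw [← integral_prod_mul, ← hm.map_eq, integral_map hm.measurable.aemeasurable]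
  rw [hm.map_eq]
  exact hi.aestronglyMeasurable

theorem aux_conv (μ : Measure E) [SigmaFinite μ] (F G : CF E)
    (hF : ∀ n, Integrable (F n) (Measure.pi fun _ => μ))
    (hG : ∀ n, Integrable (G n) (Measure.pi fun _ => μ)) (n : ℕ) :
    Integrable (conv F G n) (Measure.pi fun _ => μ) ∧
    ((n.factorial : ℝ))⁻¹ * ∫ x, conv F G n x ∂(Measure.pi fun _ => μ) =
      ∑ kl ∈ antidiagonal n,
        (((kl.1.factorial : ℝ))⁻¹ * ∫ x, F kl.1 x ∂(Measure.pi fun _ => μ)) *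
        (((kl.2.factorial : ℝ))⁻¹ * ∫ x, G kl.2 x ∂(Measure.pi fun _ => μ)) := by
  constructor
  · unfold conv
    exact integrable_finsetSum _ fun I _ => (aux_term μ F G hF hG I).1
  · unfold conv
    rw [integral_finsetSum _ fun I _ => (aux_term μ F G hF hG I).1]
    simp_rw [(aux_term μ F G hF hG _).2]
    have hcg : ∀ I : Finset (Fin n), (∫ x, G Iᶜ.card x ∂(Measure.pi fun _ => μ)) =
        ∫ x, G (n - I.card) x ∂(Measure.pi fun _ => μ) := by
      intro I
      exact congrArg (fun m => ∫ x, G m x ∂(Measure.pi fun _ => μ))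
        (by rw [Finset.card_compl, Fintype.card_fin])
    simp_rw [hcg]
    have := Finset.sum_powerset_apply_card (fun m =>
      (∫ x, F m x ∂(Measure.pi fun _ => μ)) * ∫ x, G (n - m) x ∂(Measure.pi fun _ => μ))
      (x := (Finset.univ : Finset (Fin n)))
    rw [Finset.powerset_univ, Finset.card_univ, Fintype.card_fin] at this
    rw [this, Finset.Nat.sum_antidiagonal_eq_sum_range_succ_mk, Finset.mul_sum]
    refine Finset.sum_congr rfl fun k hk => ?_
    have hk' : k ≤ n := by simpa [Nat.lt_succ_iff] using hk
    have hch : ((n.choose k : ℕ) : ℝ) = n.factorial / (k.factorial * (n - k).factorial) :=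
      Nat.cast_choose ℝ hk'
    have : (n.factorial : ℝ) ≠ 0 := by positivity
    rw [nsmul_eq_mul, hch]
    field_simp

theorem aux_exp (a : ℕ → ℝ) (b : ℕ → ℕ → ℝ) (ha : Summable fun n => ‖a n‖) (ha0 : a 0 = 0)
    (hb0 : ∀ n, b 0 n = if n = 0 then 1 else 0)
    (hb : ∀ m n, b (m + 1) n = ∑ kl ∈ antidiagonal n, a kl.1 * b m kl.2) :
    Summable (fun n => |∑ m ∈ range (n + 1), ((m.factorial : ℝ))⁻¹ * b m n|) ∧
    ∑' n, ∑ m ∈ range (n + 1), ((m.factorial : ℝ))⁻¹ * b m n = Real.exp (∑' n, a n) := by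
  have hz : ∀ m n, n < m → b m n = 0 := by
    intro m
    induction m with
    | zero => intro n h; omega
    | succ m ih =>
      intro n h
      rw [hb]
      refine Finset.sum_eq_zero fun kl hkl => ?_
      rw [HasAntidiagonal.mem_antidiagonal] at hkl
      by_cases h0 : kl.1 = 0
      · rw [h0, ha0, zero_mul]
      · rw [ih _ (by omega), mul_zero]
  have hs : ∀ m, (Summable fun n => ‖b m n‖) ∧ ∑' n, b m n = (∑' n, a n) ^ m ∧
      ∑' n, ‖b m n‖ ≤ (∑' n, ‖a n‖) ^ m := by
    intro m
    induction m with
    | zero =>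
      refine ⟨summable_of_ne_finset_zero (s := {0}) ?_, ?_, ?_⟩
      · intro n hn
        simp at hn
        simp [hb0, hn]
      · simp [hb0]
      · rw [tsum_eq_single 0]
        · simp [hb0]
        · intro n hn
          simp [hb0, hn]
    | succ m ih =>
      obtain ⟨h1, h2, h3⟩ := ih
      have hsum : Summable fun n => ‖b (m + 1) n‖ := by
        simp_rw [hb]
        exact summable_norm_sum_mul_antidiagonal_of_summable_norm ha h1
      refine ⟨hsum, ?_, ?_⟩
      · simp_rw [hb]
        rw [← tsum_mul_tsum_eq_tsum_sum_antidiagonal_of_summable_norm ha h1, h2, pow_succ']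
      · have ha' : Summable fun n => ‖‖a n‖‖ := by simpa using ha
        have h1' : Summable fun n => ‖‖b m n‖‖ := by simpa using h1
        have e := tsum_mul_tsum_eq_tsum_sum_antidiagonal_of_summable_norm ha' h1'
        have e2 := (summable_norm_sum_mul_antidiagonal_of_summable_norm ha' h1').of_norm
        calc ∑' n, ‖b (m + 1) n‖ ≤ ∑' n, ∑ kl ∈ antidiagonal n, ‖a kl.1‖ * ‖b m kl.2‖ := by
              refine hsum.tsum_le_tsum (fun n => ?_) e2
              rw [hb]
              refine (norm_sum_le _ _).trans (le_of_eq ?_)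
              simp_rw [norm_mul]
          _ = (∑' n, ‖a n‖) * ∑' n, ‖b m n‖ := e.symm
          _ ≤ _ := by
              rw [pow_succ']
              exact mul_le_mul_of_nonneg_left h3 (tsum_nonneg fun _ => norm_nonneg _)
  have hprod : Summable fun p : ℕ × ℕ => ‖((p.1.factorial : ℝ))⁻¹ * b p.1 p.2‖ := by
    rw [summable_prod_of_nonneg fun _ => norm_nonneg _]
    constructor
    · intro m
      simp_rw [norm_mul]
      exact (hs m).1.mul_left _
    · refine Summable.of_nonneg_of_le (fun m => tsum_nonneg fun _ => norm_nonneg _) (fun m => ?_)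
        (Real.summable_pow_div_factorial (∑' n, ‖a n‖))
      simp_rw [norm_mul]
      rw [tsum_mul_left, norm_inv, Real.norm_natCast, div_eq_inv_mul]
      exact mul_le_mul_of_nonneg_left (hs m).2.2 (by positivity)
  have hfin : ∀ n, ∑ m ∈ range (n + 1), ((m.factorial : ℝ))⁻¹ * b m n =
      ∑' m, ((m.factorial : ℝ))⁻¹ * b m n := by
    intro n
    rw [tsum_eq_sum]
    intro m hm
    rw [hz m n (by simpa using hm), mul_zero]
  have hsw := hprod.prod_symm
  constructor
  · refine Summable.of_nonneg_of_le (fun _ => abs_nonneg _) (fun n => ?_) hsw.prod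
    rw [hfin]
    exact norm_tsum_le_tsum_norm (hsw.prod_factor n)
  · simp_rw [hfin]
    have hp : Summable (Function.uncurry fun m n => ((m.factorial : ℝ))⁻¹ * b m n) := hprod.of_norm
    rw [hp.tsum_comm, Real.exp_eq_exp_ℝ, NormedSpace.exp_eq_tsum_div]
    refine tsum_congr fun m => ?_
    rw [tsum_mul_left, (hs m).2.1, div_eq_inv_mul]

theorem aux_lint (μ : Measure E) [SigmaFinite μ] (n : ℕ) (f : (Fin (n + 1) → E) → ENNReal)
    (hf : Measurable f) (B : ENNReal)
    (hB : ∀ x, ∫⁻ y, f (Fin.cons x y) ∂(Measure.pi fun _ => μ) ≤ B) :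
    ∫⁻ y, f y ∂(Measure.pi fun _ => μ) ≤ B * μ Set.univ := by
  have h := (measurePreserving_piFinSuccAbove (fun _ : Fin (n + 1) => μ) 0).symm
  rw [← h.lintegral_comp hf, lintegral_prod _ (by exact (hf.comp h.measurable).aemeasurable)]
  rw [← lintegral_const]
  refine lintegral_mono fun x => ?_
  simpa [MeasurableEquiv.piFinSuccAbove_symm_apply, Fin.insertNthEquiv] using hB x

theorem aux_main (μ : Measure E) [IsFiniteMeasure μ]
    (Φ : CF E) (hΦ0 : Φ 0 = 0) (hΦmeas : ∀ n, Measurable (Φ n))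
    (C c : ℝ) (hC : 0 < C) (hc0 : 0 < c) (hc : c < 1 / 2)
    (hbound : ∀ (n : ℕ) (x : E),
      ∫⁻ y, ENNReal.ofReal |Φ (n + 1) (Fin.cons x y)| ∂(Measure.pi fun _ => μ) ≤
        ENNReal.ofReal (n.factorial * C * c ^ n)) :
    Summable (fun n : ℕ =>
      ((n.factorial : ℝ))⁻¹ * |∫ y, Φ n y ∂(Measure.pi fun _ => μ)|) ∧
    Summable (fun n : ℕ =>
      ((n.factorial : ℝ))⁻¹ * |∫ y, starExp Φ n y ∂(Measure.pi fun _ => μ)|) ∧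
    ∑' n : ℕ, ((n.factorial : ℝ))⁻¹ * ∫ y, starExp Φ n y ∂(Measure.pi fun _ => μ) =
      Real.exp (∑' n : ℕ, ((n.factorial : ℝ))⁻¹ * ∫ y, Φ n y ∂(Measure.pi fun _ => μ)) := by
  have hl : ∀ n, ∫⁻ y, ENNReal.ofReal |Φ (n + 1) y| ∂(Measure.pi fun _ => μ) ≤
      ENNReal.ofReal (n.factorial * C * c ^ n) * μ Set.univ := fun n =>
    aux_lint μ n _ (hΦmeas (n + 1)).abs.ennreal_ofReal _ (hbound n)
  have hint : ∀ n, Integrable (Φ n) (Measure.pi fun _ => μ) := by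
    intro n
    cases n with
    | zero => rw [hΦ0]; exact integrable_zero _ _ _
    | succ n =>
      refine ⟨(hΦmeas _).aestronglyMeasurable, ?_⟩
      rw [hasFiniteIntegral_iff_norm]
      exact (hl n).trans_lt (ENNReal.mul_lt_top ENNReal.ofReal_lt_top (measure_lt_top _ _))
  have hsum : Summable (fun n : ℕ =>
      ((n.factorial : ℝ))⁻¹ * |∫ y, Φ n y ∂(Measure.pi fun _ => μ)|) := by
    rw [← summable_nat_add_iff 1]
    refine Summable.of_nonneg_of_le (fun n => by positivity) (fun n => ?_)
      ((summable_geometric_of_lt_one hc0.le (by linarith)).mul_left (C * μ.real Set.univ))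
    have h1 : |∫ y, Φ (n + 1) y ∂(Measure.pi fun _ => μ)| ≤
        n.factorial * C * c ^ n * μ.real Set.univ := by
      refine (norm_integral_le_lintegral_norm (Φ (n + 1))).trans ?_
      have := ENNReal.toReal_mono
        (ENNReal.mul_lt_top ENNReal.ofReal_lt_top (measure_lt_top μ Set.univ)).ne (hl n)
      rwa [ENNReal.toReal_mul, ENNReal.toReal_ofReal (by positivity)] at this
    rw [inv_mul_le_iff₀ (by positivity)]
    refine h1.trans ?_
    have h2 : (n.factorial : ℝ) ≤ ((n + 1).factorial : ℝ) := by
      exact_mod_cast Nat.factorial_le (Nat.le_succ n)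
    calc _ = (n.factorial : ℝ) * (C * μ.real Set.univ * c ^ n) := by ring
      _ ≤ _ := mul_le_mul_of_nonneg_right h2 (by positivity)
  have hpow : ∀ m n, Integrable (starPow Φ m n) (Measure.pi fun _ => μ) := by
    intro m
    induction m with
    | zero => intro n; exact integrable_const _
    | succ m ih => exact fun n => (aux_conv μ Φ (starPow Φ m) hint ih n).1
  have hexp : ∀ n, ((n.factorial : ℝ))⁻¹ * ∫ y, starExp Φ n y ∂(Measure.pi fun _ => μ) =
      ∑ m ∈ range (n + 1), ((m.factorial : ℝ))⁻¹ *
        (((n.factorial : ℝ))⁻¹ * ∫ y, starPow Φ m n y ∂(Measure.pi fun _ => μ)) := by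
    intro n
    unfold starExp
    rw [integral_finsetSum _ fun m _ => (hpow m n).const_mul _, Finset.mul_sum]
    refine Finset.sum_congr rfl fun m _ => ?_
    rw [integral_const_mul]
    ring
  have key := aux_exp
    (fun n => ((n.factorial : ℝ))⁻¹ * ∫ y, Φ n y ∂(Measure.pi fun _ => μ))
    (fun m n => ((n.factorial : ℝ))⁻¹ * ∫ y, starPow Φ m n y ∂(Measure.pi fun _ => μ))
    (by
      refine hsum.congr fun n => ?_
      rw [norm_mul, norm_inv, Real.norm_natCast, Real.norm_eq_abs])
    (by simp [hΦ0])
    (by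
      intro n
      by_cases hn : n = 0
      · subst hn
        simp [starPow, CF.unit, Measure.real]
      · simp [starPow, CF.unit, hn])
    (fun m n => (aux_conv μ Φ (starPow Φ m) hint (hpow m) n).2)
  refine ⟨hsum, ?_, ?_⟩
  · refine key.1.congr fun n => ?_
    rw [← hexp, abs_mul, abs_inv, Nat.abs_cast]
  · rw [← key.2]
    exact tsum_congr hexp

end Aux

open CF MeasureTheory in
/-- Lemma 2.2, exponential representation. -/
theorem exponential_representation (d : ℕ) (hd : 1 ≤ d)
    (Λ : Set (Euc d)) (hΛbdd : Bornology.IsBounded Λ) (hΛmeas : MeasurableSet Λ)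
    (Φ : CF (Euc d)) (hΦ0 : Φ 0 = 0) (hΦsymm : IsSymm Φ)
    (hΦmeas : ∀ n, Measurable (Φ n))
    (C c : ℝ) (hC : 0 < C) (hc0 : 0 < c) (hc : c < 1 / 2)
    (hbound : ∀ (n : ℕ) (x : Euc d),
      ∫⁻ y, ENNReal.ofReal |Φ (n + 1) (Fin.cons x y)| ∂(piRestrict d Λ n) ≤
        ENNReal.ofReal (n.factorial * C * c ^ n)) :
    Summable (fun n : ℕ =>
      ((n.factorial : ℝ))⁻¹ * |∫ y, Φ n y ∂(piRestrict d Λ n)|) ∧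
    Summable (fun n : ℕ =>
      ((n.factorial : ℝ))⁻¹ * |∫ y, starExp Φ n y ∂(piRestrict d Λ n)|) ∧
    ∑' n : ℕ, ((n.factorial : ℝ))⁻¹ * ∫ y, starExp Φ n y ∂(piRestrict d Λ n) =
      Real.exp (∑' n : ℕ, ((n.factorial : ℝ))⁻¹ * ∫ y, Φ n y ∂(piRestrict d Λ n)) := by
  have : IsFiniteMeasure (volume.restrict Λ) :=
    ⟨by rw [Measure.restrict_apply_univ]; exact hΛbdd.measure_lt_top⟩
  exact aux_main (volume.restrict Λ) Φ hΦ0 hΦmeas C c hC hc0 hc hbound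
end

section
/- (Exponential formula for the void probability, equation (2.14).) Let d ≥ 1, let Λ ⊆ ℝ^d be a bounded measurable set, and let ρ = (ρ^{(n)})_{n≥0} be a configuration functional over E = ℝ^d with ρ^{(0)} = 1, and let ρ_T ∈ A₀ be the (unique) configuration functional with ρ = exp∗ ρ_T. Suppose each ρ_T^{(n)} is measurable and there are constants C > 0 and 0 < c < 1/2 such that for every n ≥ 0 and every x ∈ ℝ^d, ∫_{Λ^n} |ρ_T^{(n+1)}(x,y₁,…,y_n)| dy₁…dy_n ≤ n! · C · c^n. Then the series Σ_{k≥1} ((−1)^k/k!) ∫_{Λ^k} ρ_T^{(k)}(y₁,…,y_k) dy and Σ_{k≥0} ((−1)^k/k!) ∫_{Λ^k} ρ^{(k)}(y₁,…,y_k) dy converge absolutely, and Σ_{k=0}^∞ ((−1)^k/k!) ∫_{Λ^k} ρ^{(k)}(y₁,…,y_k) dy = exp( Σ_{k=1}^∞ ((−1)^k/k!) ∫_{Λ^k} ρ_T^{(k)}(y₁,…,y_k) dy ). -/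
open MeasureTheory Finset

section VoidHelpers
open CF

theorem vp_mp {E : Type} [MeasurableSpace E] (μ : Measure E) [IsFiniteMeasure μ] {n : ℕ}
    (I : Finset (Fin n)) :
    MeasurePreserving (fun x : Fin n → E => (sub x I, sub x Iᶜ)) (Measure.pi fun _ => μ)
      ((Measure.pi fun _ => μ).prod (Measure.pi fun _ => μ)) := by
  have h1 := (measurePreserving_piCongrLeft (fun _ : Fin n => μ)
    (finSumEquivOfFinset (s := I) rfl rfl)).symm
  have h2 := measurePreserving_sumPiEquivProdPi (X := fun _ : Fin I.card ⊕ Fin Iᶜ.card => E)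
    (fun _ => μ)
  exact h2.comp h1

theorem vp_int_term {E : Type} [MeasurableSpace E] (μ : Measure E) [IsFiniteMeasure μ]
    (F G : CF E) (hF : ∀ n, Integrable (F n) (Measure.pi fun _ => μ))
    (hG : ∀ n, Integrable (G n) (Measure.pi fun _ => μ)) {n : ℕ} (I : Finset (Fin n)) :
    Integrable (fun x => F I.card (sub x I) * G Iᶜ.card (sub x Iᶜ)) (Measure.pi fun _ => μ) := by
  have h := (hF I.card).mul_prod (hG Iᶜ.card)
  exact ((vp_mp μ I).integrable_comp h.aestronglyMeasurable).2 h

theorem vp_integral_term {E : Type} [MeasurableSpace E] (μ : Measure E) [IsFiniteMeasure μ]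
    (F G : CF E) (hF : ∀ n, Integrable (F n) (Measure.pi fun _ => μ))
    (hG : ∀ n, Integrable (G n) (Measure.pi fun _ => μ)) {n : ℕ} (I : Finset (Fin n)) :
    ∫ x, F I.card (sub x I) * G Iᶜ.card (sub x Iᶜ) ∂(Measure.pi fun _ => μ) =
      (∫ x, F I.card x ∂(Measure.pi fun _ => μ)) *
        ∫ x, G Iᶜ.card x ∂(Measure.pi fun _ => μ) := by
  have h := (hF I.card).mul_prod (hG Iᶜ.card)
  rw [← integral_prod_mul, ← (vp_mp μ I).map_eq, integral_map (vp_mp μ I).measurable.aemeasurable]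
  rw [(vp_mp μ I).map_eq]
  exact h.aestronglyMeasurable

theorem vp_int_conv {E : Type} [MeasurableSpace E] (μ : Measure E) [IsFiniteMeasure μ]
    (F G : CF E) (hF : ∀ n, Integrable (F n) (Measure.pi fun _ => μ))
    (hG : ∀ n, Integrable (G n) (Measure.pi fun _ => μ)) (n : ℕ) :
    Integrable (conv F G n) (Measure.pi fun _ => μ) := by
  unfold conv
  exact integrable_finsetSum _ fun I _ => vp_int_term μ F G hF hG I

noncomputable def vpT {E : Type} [MeasurableSpace E] (μ : Measure E) (F : CF E) (k : ℕ) : ℝ :=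
  (-1 : ℝ) ^ k / k.factorial * ∫ y, F k y ∂(Measure.pi fun _ => μ)

theorem vp_T_conv {E : Type} [MeasurableSpace E] (μ : Measure E) [IsFiniteMeasure μ]
    (F G : CF E) (hF : ∀ n, Integrable (F n) (Measure.pi fun _ => μ))
    (hG : ∀ n, Integrable (G n) (Measure.pi fun _ => μ)) (n : ℕ) :
    vpT μ (conv F G) n = ∑ p ∈ antidiagonal n, vpT μ F p.1 * vpT μ G p.2 := by
  have h1 : ∫ y, conv F G n y ∂(Measure.pi fun _ => μ) =
      ∑ I : Finset (Fin n), (∫ x, F I.card x ∂(Measure.pi fun _ => μ)) *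
        ∫ x, G (n - I.card) x ∂(Measure.pi fun _ => μ) := by
    unfold conv
    rw [integral_finsetSum _ fun I _ => vp_int_term μ F G hF hG I]
    refine Finset.sum_congr rfl fun I _ => ?_
    rw [vp_integral_term μ F G hF hG I]
    have : Iᶜ.card = n - I.card := by rw [Finset.card_compl, Fintype.card_fin]
    rw [this]
  have h2 := Finset.sum_powerset_apply_card (fun k => (∫ x, F k x ∂(Measure.pi fun _ => μ)) *
        ∫ x, G (n - k) x ∂(Measure.pi fun _ => μ)) (x := (Finset.univ : Finset (Fin n)))
  rw [Finset.powerset_univ] at h2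
  rw [vpT, h1, h2, Finset.card_univ, Fintype.card_fin, Finset.mul_sum,
    Finset.Nat.sum_antidiagonal_eq_sum_range_succ_mk]
  refine Finset.sum_congr rfl fun k hk => ?_
  have hk' : k ≤ n := by simpa [Nat.lt_succ_iff] using hk
  unfold vpT
  rw [nsmul_eq_mul, Nat.cast_choose ℝ hk']
  have e : (-1 : ℝ) ^ n = (-1) ^ k * (-1) ^ (n - k) := by rw [← pow_add]; congr 1; omega
  rw [e]
  have a1 : (n.factorial : ℝ) ≠ 0 := by positivity
  have a2 : (k.factorial : ℝ) ≠ 0 := by positivity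
  have a3 : ((n - k).factorial : ℝ) ≠ 0 := by positivity
  field_simp

/-- Cauchy powers of a sequence. -/
noncomputable def vpB (a : ℕ → ℝ) : ℕ → ℕ → ℝ
  | 0 => fun k => if k = 0 then 1 else 0
  | m + 1 => fun k => ∑ p ∈ antidiagonal k, a p.1 * vpB a m p.2

theorem vpB_zero (a : ℕ → ℝ) (ha : a 0 = 0) (m : ℕ) : ∀ k, k < m → vpB a m k = 0 := by
  induction m with
  | zero => intro k hk; omega
  | succ m ih =>
    intro k hk
    refine Finset.sum_eq_zero fun p hp => ?_
    have hp := Finset.HasAntidiagonal.mem_antidiagonal.1 hp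
    rcases Nat.eq_zero_or_pos p.1 with h | h
    · rw [h, ha, zero_mul]
    · rw [ih p.2 (by omega), mul_zero]

theorem vpB_sum (a : ℕ → ℝ) (hs : Summable fun k => ‖a k‖) (m : ℕ) :
    (Summable fun k => ‖vpB a m k‖) ∧ ∑' k, vpB a m k = (∑' k, a k) ^ m ∧
      ∑' k, ‖vpB a m k‖ ≤ (∑' k, ‖a k‖) ^ m := by
  induction m with
  | zero =>
    have h : (fun k => ‖vpB a 0 k‖) = fun k => if k = 0 then (1 : ℝ) else 0 := by
      funext k; by_cases hk : k = 0 <;> simp [vpB, hk]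
    have h' : vpB a 0 = fun k => if k = 0 then (1 : ℝ) else 0 := rfl
    rw [h, h', tsum_ite_eq]
    refine ⟨(hasSum_ite_eq 0 1).summable, by simp, by simp⟩
  | succ m ih =>
    obtain ⟨i1, i2, i3⟩ := ih
    have s1 := summable_norm_sum_mul_antidiagonal_of_summable_norm hs i1
    refine ⟨s1, ?_, ?_⟩
    · rw [pow_succ', ← i2, tsum_mul_tsum_eq_tsum_sum_antidiagonal_of_summable_norm hs i1]; rfl
    · have hs' : Summable fun k => ‖(‖a k‖)‖ := by simpa using hs
      have i1' : Summable fun k => ‖(‖vpB a m k‖)‖ := by simpa using i1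
      calc ∑' k, ‖vpB a (m + 1) k‖
          ≤ ∑' k, ∑ p ∈ antidiagonal k, ‖a p.1‖ * ‖vpB a m p.2‖ := by
            refine s1.tsum_le_tsum (fun k => ?_)
              (summable_norm_sum_mul_antidiagonal_of_summable_norm hs' i1').of_norm
            refine (norm_sum_le _ _).trans (le_of_eq ?_)
            simp [norm_mul]
        _ = (∑' k, ‖a k‖) * ∑' k, ‖vpB a m k‖ :=
            (tsum_mul_tsum_eq_tsum_sum_antidiagonal_of_summable_norm hs' i1').symm
        _ ≤ _ := by
            rw [pow_succ']
            exact mul_le_mul_of_nonneg_left i3 (tsum_nonneg fun _ => norm_nonneg _)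

theorem vp_exp (a r : ℕ → ℝ) (ha : a 0 = 0) (hs : Summable fun k => ‖a k‖)
    (hr : ∀ k, r k = ∑ m ∈ Finset.range (k + 1), (m.factorial : ℝ)⁻¹ * vpB a m k) :
    (Summable fun k => ‖r k‖) ∧ ∑' k, r k = Real.exp (∑' k, a k) := by
  have hr' : ∀ k, r k = ∑' m, (m.factorial : ℝ)⁻¹ * vpB a m k := by
    intro k
    rw [hr, tsum_eq_sum]
    intro m hm
    rw [vpB_zero a ha m k (by simpa using hm), mul_zero]
  have hsum : Summable fun p : ℕ × ℕ => ‖(p.1.factorial : ℝ)⁻¹ * vpB a p.1 p.2‖ := by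
    rw [summable_prod_of_nonneg (fun _ => norm_nonneg _)]
    simp only [norm_mul]
    refine ⟨fun m => (vpB_sum a hs m).1.mul_left _, ?_⟩
    simp only [tsum_mul_left]
    refine Summable.of_nonneg_of_le
      (fun m => mul_nonneg (norm_nonneg _) (tsum_nonneg fun _ => norm_nonneg _))
      (fun m => mul_le_mul_of_nonneg_left (vpB_sum a hs m).2.2 (norm_nonneg _)) ?_
    refine (Real.summable_pow_div_factorial (∑' k, ‖a k‖)).congr fun m => ?_
    simp [div_eq_inv_mul]
  constructor
  · have h2 := ((Equiv.prodComm ℕ ℕ).summable_iff.2 hsum).prod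
    have h2 : Summable fun k => ∑' m, ‖(m.factorial : ℝ)⁻¹ * vpB a m k‖ := h2
    refine Summable.of_nonneg_of_le (fun _ => norm_nonneg _) (fun k => ?_) h2
    rw [hr']
    refine norm_tsum_le_tsum_norm ?_
    exact ((Equiv.prodComm ℕ ℕ).summable_iff.2 hsum).prod_factor k
  · simp only [hr']
    rw [Summable.tsum_comm (f := fun m k => (m.factorial : ℝ)⁻¹ * vpB a m k)
      hsum.of_norm]
    simp only [tsum_mul_left, (vpB_sum a hs _).2.1]
    rw [Real.exp_eq_exp_ℝ, NormedSpace.exp_eq_tsum_div]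
    simp [div_eq_inv_mul]

theorem vp_starPow {E : Type} [MeasurableSpace E] (μ : Measure E) [IsFiniteMeasure μ]
    (F : CF E) (hF : ∀ n, Integrable (F n) (Measure.pi fun _ => μ)) (m : ℕ) :
    (∀ n, Integrable (starPow F m n) (Measure.pi fun _ => μ)) ∧
      ∀ n, vpT μ (starPow F m) n = vpB (vpT μ F) m n := by
  induction m with
  | zero =>
    refine ⟨fun n => integrable_const _, fun n => ?_⟩
    rcases Nat.eq_zero_or_pos n with h | h
    · subst h
      simp [vpT, vpB, starPow, CF.unit, Measure.real, Measure.pi_univ]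
    · simp [vpT, vpB, starPow, CF.unit, h.ne']
  | succ m ih =>
    refine ⟨fun n => vp_int_conv μ F _ hF ih.1 n, fun n => ?_⟩
    simp only [starPow, vpB]
    rw [vp_T_conv μ F _ hF ih.1]
    simp only [ih.2]

theorem vp_starExp {E : Type} [MeasurableSpace E] (μ : Measure E) [IsFiniteMeasure μ]
    (F : CF E) (hF : ∀ n, Integrable (F n) (Measure.pi fun _ => μ)) (k : ℕ) :
    vpT μ (starExp F) k =
      ∑ m ∈ Finset.range (k + 1), (m.factorial : ℝ)⁻¹ * vpB (vpT μ F) m k := by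
  simp only [← (vp_starPow μ F hF _).2]
  unfold vpT starExp
  rw [integral_finsetSum _ fun m _ => ((vp_starPow μ F hF m).1 k).const_mul _, Finset.mul_sum]
  refine Finset.sum_congr rfl fun m _ => ?_
  rw [integral_const_mul]; ring

theorem vp_bound {E : Type} [MeasurableSpace E] (μ : Measure E) [IsFiniteMeasure μ]
    (n : ℕ) (f : (Fin (n + 1) → E) → ℝ) (hf : Measurable f) (B : ℝ) (hB : 0 ≤ B)
    (h : ∀ x, ∫⁻ y, ENNReal.ofReal |f (Fin.cons x y)| ∂(Measure.pi fun _ => μ) ≤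
      ENNReal.ofReal B) :
    Integrable f (Measure.pi fun _ => μ) ∧
      |∫ y, f y ∂(Measure.pi fun _ => μ)| ≤ B * μ.real Set.univ := by
  have hm := (measurePreserving_piFinSuccAbove (fun _ : Fin (n + 1) => μ) 0).symm
  have key : ∫⁻ y, ENNReal.ofReal |f y| ∂(Measure.pi fun _ => μ) ≤
      ENNReal.ofReal (B * μ.real Set.univ) := by
    have hg : Measurable fun y => ENNReal.ofReal |f y| := by fun_prop
    rw [← hm.lintegral_comp hg, lintegral_prod _ (by exact (hg.comp hm.measurable).aemeasurable)]
    calc _ ≤ ∫⁻ x, ENNReal.ofReal B ∂μ := by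
          refine lintegral_mono fun x => ?_
          refine le_trans (le_of_eq ?_) (h x)
          refine lintegral_congr fun y => ?_
          simp [MeasurableEquiv.piFinSuccAbove, Fin.insertNthEquiv]
      _ = _ := by
          rw [lintegral_const, ENNReal.ofReal_mul hB, Measure.real,
            ENNReal.ofReal_toReal (measure_ne_top _ _)]
  have key' : ∫⁻ y, ‖f y‖ₑ ∂(Measure.pi fun _ => μ) ≤ ENNReal.ofReal (B * μ.real Set.univ) := by
    simpa only [← Real.norm_eq_abs, ofReal_norm] using key
  refine ⟨⟨hf.aestronglyMeasurable, key'.trans_lt ENNReal.ofReal_lt_top⟩, ?_⟩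
  rw [← Real.norm_eq_abs]
  refine (norm_integral_le_lintegral_norm f).trans ?_
  refine ENNReal.toReal_le_of_le_ofReal (by positivity) ?_
  simpa only [← Real.norm_eq_abs] using key

end VoidHelpers

open CF MeasureTheory in
/-- eq. (2.14): exponential formula for the void probability. -/
theorem void_probability_formula (d : ℕ) (hd : 1 ≤ d)
    (Λ : Set (Euc d)) (hΛbdd : Bornology.IsBounded Λ) (hΛmeas : MeasurableSet Λ)
    (ρ ρT : CF (Euc d)) (hρ0 : ρ 0 = 1) (hρsymm : IsSymm ρ)
    (hρT0 : ρT 0 = 0) (hρTsymm : IsSymm ρT) (hρTexp : starExp ρT = ρ)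
    (hρTmeas : ∀ n, Measurable (ρT n))
    (C c : ℝ) (hC : 0 < C) (hc0 : 0 < c) (hc : c < 1 / 2)
    (hbound : ∀ (n : ℕ) (x : Euc d),
      ∫⁻ y, ENNReal.ofReal |ρT (n + 1) (Fin.cons x y)| ∂(piRestrict d Λ n) ≤
        ENNReal.ofReal (n.factorial * C * c ^ n)) :
    Summable (fun k : ℕ =>
      |(-1 : ℝ) ^ k / k.factorial * ∫ y, ρT k y ∂(piRestrict d Λ k)|) ∧
    Summable (fun k : ℕ =>
      |(-1 : ℝ) ^ k / k.factorial * ∫ y, ρ k y ∂(piRestrict d Λ k)|) ∧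
    ∑' k : ℕ, (-1 : ℝ) ^ k / k.factorial * ∫ y, ρ k y ∂(piRestrict d Λ k) =
      Real.exp
        (∑' k : ℕ, (-1 : ℝ) ^ k / k.factorial * ∫ y, ρT k y ∂(piRestrict d Λ k)) := by
  set μ : Measure (Euc d) := volume.restrict Λ with hμ
  haveI : IsFiniteMeasure μ := ⟨by
    rw [hμ, Measure.restrict_apply_univ]; exact hΛbdd.measure_lt_top⟩
  have hb : ∀ n, Integrable (ρT (n + 1)) (Measure.pi fun _ => μ) ∧
      |∫ y, ρT (n + 1) y ∂(Measure.pi fun _ => μ)| ≤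
        (n.factorial * C * c ^ n) * μ.real Set.univ := fun n =>
    vp_bound μ n _ (hρTmeas _) _ (by positivity) (hbound n)
  have hint : ∀ n, Integrable (ρT n) (Measure.pi fun _ => μ) := by
    intro n
    cases n with
    | zero => rw [hρT0]; exact integrable_zero _ _ _
    | succ n => exact (hb n).1
  have ha0 : vpT μ ρT 0 = 0 := by simp [vpT, hρT0]
  have hs : Summable fun k => ‖vpT μ ρT k‖ := by
    rw [← summable_nat_add_iff 1]
    refine Summable.of_nonneg_of_le (fun _ => norm_nonneg _) (fun n => ?_)
      ((summable_geometric_of_lt_one hc0.le (by linarith)).mul_left (C * μ.real Set.univ))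
    rw [vpT, norm_mul, norm_div, norm_pow, norm_neg, norm_one, one_pow, Real.norm_natCast,
      Real.norm_eq_abs]
    have h1 : (0 : ℝ) < (n + 1).factorial := by positivity
    rw [one_div, inv_mul_le_iff₀ h1]
    refine (hb n).2.trans ?_
    have h2 : (n.factorial : ℝ) ≤ (n + 1).factorial := by
      exact_mod_cast Nat.factorial_le (Nat.le_succ n)
    have h3 : 0 ≤ C * μ.real Set.univ * c ^ n := by positivity
    calc _ = (n.factorial : ℝ) * (C * μ.real Set.univ * c ^ n) := by ring
      _ ≤ _ := mul_le_mul_of_nonneg_right h2 h3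
  have hfin := vp_exp (vpT μ ρT) (vpT μ ρ) ha0 hs
    (fun k => by rw [← hρTexp]; exact vp_starExp μ ρT hint k)
  exact ⟨hs, hfin.1, hfin.2⟩
end

section
/- (Remark 3.2, recursion for the two-point kernels, equation (3.9).) Let ρ = (ρ^{(n)})_{n≥0} be a configuration functional over a type E with ρ^{(0)} = 1, let ρ_T ∈ A₀ satisfy ρ = exp∗ ρ_T, let x₁, x₂ ∈ E with ρ^{(1)}(x₁) ≠ 0, ρ^{(1)}(x₂) ≠ 0, ρ^{(2)}(x₁,x₂) ≠ 0, and let ω = ω_{(x₁,x₂)} ∈ A₀ be the unique functional satisfying D_{x₁,x₂} ρ_T / ρ^{(2)}(x₁,x₂) = ( exp∗ ω − (ρ^{(1)}(x₁)ρ^{(1)}(x₂)/ρ^{(2)}(x₁,x₂)) · 𝟙 ) ∗ ( D_{x₁} ρ_T / ρ^{(1)}(x₁) ) ∗ ( D_{x₂} ρ_T / ρ^{(1)}(x₂) ). Then for every k ≥ 1 and all y₁,…,y_k ∈ E: ω^{(k)}(y₁,…,y_k) = ρ_T^{(2+k)}(x₁,x₂,y₁,…,y_k)/ρ^{(2)}(x₁,x₂)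 − (ρ_T^{(2)}(x₁,x₂)/ρ^{(2)}(x₁,x₂)) · Σ_{(σ₁,σ₂)} [ρ_T^{(1+|σ₁|)}(x₁,y_{σ₁})/ρ^{(1)}(x₁)] · [ρ_T^{(1+|σ₂|)}(x₂,y_{σ₂})/ρ^{(1)}(x₂)] − Σ_{(σ₁,σ₂,σ₃), 0 < |σ₃| < k} [ρ_T^{(1+|σ₁|)}(x₁,y_{σ₁})/ρ^{(1)}(x₁)] · [ρ_T^{(1+|σ₂|)}(x₂,y_{σ₂})/ρ^{(1)}(x₂)] · Σ_{l=1}^{|σ₃|} (1/l!) Σ_{π ∈ Π_l(σ₃)} ∏_{i=1}^{l} ω^{(|π_i|)}(y_{π_i}) − Σ_{l=2}^{k} (1/l!) Σ_{π ∈ Π_l({1,…,k})} ∏_{i=1}^{l} ω^{(|π_i|)}(y_{π_i}); here (σ₁,σ₂) ranges over ordered pairs of disjoint, possibly empty subsets of {1,…,k} with σ₁ ∪ σ₂ = {1,…,k}, (σ₁,σ₂,σ₃) ranges over ordered triples of pairwise disjoint, possibly empty subsets with union {1,…,k} and 0 < |σ₃| < k, Π_l(S) denotes the set of partitions of a finite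 set S into l nonempty blocks, y_σ denotes the subtuple with indices in σ, and ρ_T^{(1+0)}(x_i, y_∅)/ρ^{(1)}(x_i) is interpreted as 1 for an empty part. -/
open MeasureTheory Finset

namespace CF

/-- Ordered partitions of the subset `S ⊆ {1,…,n}` into `l` nonempty, pairwise
disjoint parts whose union is `S`. -/
def ordPartsOf (l : ℕ) {n : ℕ} (S : Finset (Fin n)) : Finset (Fin l → Finset (Fin n)) :=
  Finset.univ.filter fun π =>
    (∀ i, (π i).Nonempty) ∧ (∀ i j, i ≠ j → Disjoint (π i) (π j)) ∧
      (∀ a, a ∈ S ↔ ∃ i, a ∈ π i)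

/-- Set partitions of `{1,…,n}` into nonempty blocks, encoded as the finset of blocks. -/
def setPartitions (n : ℕ) : Finset (Finset (Finset (Fin n))) :=
  Finset.univ.filter fun P =>
    (∀ B ∈ P, B.Nonempty) ∧ (∀ B ∈ P, ∀ B' ∈ P, B ≠ B' → Disjoint B B') ∧
      (∀ a : Fin n, ∃ B ∈ P, a ∈ B)

end CF

namespace CF
variable {E : Type}

noncomputable def ev (F : CF E) {k : ℕ} (y : Fin k → E) (S : Finset (Fin k)) : ℝ :=
  F S.card (sub y S)

lemma app_cast (F : CF E) {n m : ℕ} (h : n = m) (x : Fin n → E) (x' : Fin m → E)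
    (hx : ∀ i, x i = x' (Fin.cast h i)) : F n x = F m x' := by
  subst h
  congr 1
  funext i
  exact hx i

lemma emb_cast {k n m : ℕ} (S : Finset (Fin k)) (h : S.card = n) (h' : S.card = m)
    (e : n = m) (i : Fin n) : S.orderEmbOfFin h i = S.orderEmbOfFin h' (Fin.cast e i) := by
  subst e
  rfl

lemma ev_sub (F : CF E) {k : ℕ} (y : Fin k → E) (S : Finset (Fin k)) (I : Finset (Fin S.card)) :
    F I.card (sub (sub y S) I) = ev F y (I.map (S.orderEmbOfFin rfl).toEmbedding) := by
  have hc : (I.map (S.orderEmbOfFin rfl).toEmbedding).card = I.card := Finset.card_map _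
  refine app_cast F hc.symm _ _ ?_
  intro i
  simp only [sub]
  congr 1
  have := Finset.orderEmbOfFin_unique (s := I.map (S.orderEmbOfFin rfl).toEmbedding) hc
    (f := fun i => S.orderEmbOfFin rfl (I.orderEmbOfFin rfl i)) (by
      intro x; simp) (by
      intro a b hab; simpa using hab)
  have h2 := congrFun this i
  simp only [Finset.coe_orderIsoOfFin_apply] at h2 ⊢
  rw [h2]
  exact emb_cast _ _ _ _ _

lemma ev_univ (F : CF E) {k : ℕ} (y : Fin k → E) : ev F y univ = F k y := by
  have hc : (univ : Finset (Fin k)).card = k := Finset.card_fin k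
  refine app_cast F hc _ _ ?_
  intro i
  simp only [sub]
  congr 1
  have := Finset.orderEmbOfFin_unique (s := (univ : Finset (Fin k))) hc
    (f := id) (by intro x; simp) strictMono_id
  have h2 := congrFun this (Fin.cast hc i)
  simp only [Finset.coe_orderIsoOfFin_apply, id] at h2 ⊢
  refine Eq.trans ?_ h2.symm
  exact emb_cast _ _ _ _ _

lemma ev_conv (F G : CF E) {k : ℕ} (y : Fin k → E) (S : Finset (Fin k)) :
    ev (conv F G) y S = ∑ I ∈ S.powerset, ev F y I * ev G y (S \ I) := by
  have e0 : ev (conv F G) y S = ∑ I : Finset (Fin S.card),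
      F I.card (sub (sub y S) I) * G Iᶜ.card (sub (sub y S) Iᶜ) := rfl
  rw [e0]
  simp only [ev_sub]
  have himg : (univ : Finset (Fin S.card)).map (S.orderEmbOfFin rfl).toEmbedding = S := by
    simp
  refine Finset.sum_bij' (fun I _ => I.map (S.orderEmbOfFin rfl).toEmbedding)
    (fun J _ => univ.filter (fun i => S.orderEmbOfFin rfl i ∈ J)) ?_ ?_ ?_ ?_ ?_
  · intro I _
    rw [mem_powerset]
    exact (Finset.map_subset_map.2 (Finset.subset_univ I)).trans himg.subset
  · simp
  · intro I _
    ext i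
    simp
  · intro J hJ
    rw [mem_powerset] at hJ
    ext a
    simp only [mem_map, mem_filter, mem_univ, true_and]
    constructor
    · rintro ⟨i, hi, rfl⟩; exact hi
    · intro ha
      have := hJ ha
      rw [← himg] at this
      simp only [mem_map, mem_univ, true_and] at this
      obtain ⟨i, hi⟩ := this
      refine ⟨i, ?_, hi⟩
      rw [← hi] at ha
      exact ha
  · intro I _
    have : Iᶜ.map (S.orderEmbOfFin rfl).toEmbedding
        = S \ I.map (S.orderEmbOfFin rfl).toEmbedding := by
      rw [Finset.compl_eq_univ_sdiff, Finset.map_sdiff, himg]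
    rw [this]

lemma ev_unit {k : ℕ} (y : Fin k → E) (S : Finset (Fin k)) :
    ev unit y S = if S = ∅ then 1 else 0 := by
  simp [ev, unit]

lemma ordParts_zero {k : ℕ} (S : Finset (Fin k)) (f : Finset (Fin k) → ℝ) :
    ∑ π ∈ ordPartsOf 0 S, ∏ i, f (π i) = if S = ∅ then 1 else 0 := by
  split_ifs with h
  · subst h
    simp [ordPartsOf]
  · have : ordPartsOf 0 S = ∅ := by
      simp only [ordPartsOf, filter_eq_empty_iff]
      rintro π - ⟨-, -, h3⟩
      apply h
      ext a
      simp [h3 a]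
    simp [this]

lemma ordParts_succ {k : ℕ} (l : ℕ) (S : Finset (Fin k)) (f : Finset (Fin k) → ℝ)
    (hf : f ∅ = 0) :
    ∑ π ∈ ordPartsOf (l + 1) S, ∏ i, f (π i) =
      ∑ I ∈ S.powerset, f I * ∑ π ∈ ordPartsOf l (S \ I), ∏ i, f (π i) := by
  have : ∑ I ∈ S.powerset, f I * ∑ π ∈ ordPartsOf l (S \ I), ∏ i, f (π i)
      = ∑ I ∈ S.powerset.filter (fun I => I.Nonempty),
          f I * ∑ π ∈ ordPartsOf l (S \ I), ∏ i, f (π i) := by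
    symm
    apply Finset.sum_subset (Finset.filter_subset _ _)
    intro I hI hI'
    have : I = ∅ := by
      simp only [mem_filter, hI, true_and] at hI'
      exact Finset.not_nonempty_iff_eq_empty.1 hI'
    simp [this, hf]
  rw [this]
  simp_rw [Finset.mul_sum]
  rw [Finset.sum_sigma']
  refine Finset.sum_bij' (fun π _ => ⟨π 0, Fin.tail π⟩) (fun p _ => Fin.cons p.1 p.2)
    ?_ ?_ ?_ ?_ ?_
  · intro π hπ
    simp only [ordPartsOf, mem_filter, mem_univ, true_and, mem_sigma, mem_powerset] at hπ ⊢
    obtain ⟨a1, a2, a3⟩ := hπ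
    refine ⟨⟨?_, a1 0⟩, fun i => a1 _, fun i j hij => a2 _ _ (by simpa using hij), ?_⟩
    · intro a ha; exact (a3 a).2 ⟨0, ha⟩
    · intro a
      rw [mem_sdiff, a3, Fin.exists_fin_succ]
      constructor
      · rintro ⟨h | h, h'⟩
        · exact absurd h h'
        · exact h
      · rintro ⟨i, hi⟩
        refine ⟨Or.inr ⟨i, hi⟩, fun h0 => ?_⟩
        exact Finset.disjoint_left.1 (a2 0 i.succ (Fin.succ_ne_zero i).symm) h0 hi
  · rintro ⟨I, π⟩ hπ
    simp only [ordPartsOf, mem_filter, mem_univ, true_and, mem_sigma, mem_powerset] at hπ ⊢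
    obtain ⟨⟨b1, b2⟩, a1, a2, a3⟩ := hπ
    have hd : ∀ i, Disjoint I (π i) := by
      intro i
      rw [Finset.disjoint_left]
      intro a ha hb
      exact (mem_sdiff.1 ((a3 a).2 ⟨i, hb⟩)).2 ha
    refine ⟨?_, ?_, ?_⟩
    · intro i
      refine Fin.cases ?_ (fun i => ?_) i
      · simpa using b2
      · simpa using a1 i
    · intro i j
      refine Fin.cases ?_ (fun i => ?_) i <;> refine Fin.cases ?_ (fun j => ?_) j
      · simp
      · intro _; simpa using hd j
      · intro _; simpa using (hd i).symm
      · intro h; simpa using a2 i j (by simpa using h)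
    · intro a
      rw [Fin.exists_fin_succ]
      simp only [Fin.cons_zero, Fin.cons_succ]
      rw [← a3, mem_sdiff]
      constructor
      · intro h; by_cases h' : a ∈ I
        · exact Or.inl h'
        · exact Or.inr ⟨h, h'⟩
      · rintro (h | h)
        · exact b1 h
        · exact h.1
  · intro π _; simp
  · rintro ⟨I, π⟩ _; simp
  · intro π _
    rw [Fin.prod_univ_succ]
    rfl

lemma ev_starPow (F : CF E) (hF : F 0 = 0) {k : ℕ} (y : Fin k → E) (m : ℕ) :
    ∀ S, ev (starPow F m) y S = ∑ π ∈ ordPartsOf m S, ∏ i, ev F y (π i) := by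
  have h0 : ev F y ∅ = 0 := by
    have := congrFun hF (sub y ∅)
    exact this
  induction m with
  | zero => intro S; rw [ordParts_zero]; exact ev_unit y S
  | succ m ih =>
    intro S
    rw [ordParts_succ m S _ h0]
    rw [starPow, ev_conv]
    simp_rw [ih]

lemma ev_starExp (F : CF E) (hF : F 0 = 0) {k : ℕ} (y : Fin k → E) (S : Finset (Fin k)) :
    ev (starExp F) y S = ∑ m ∈ range (S.card + 1), ((m.factorial : ℝ))⁻¹ *
      ∑ π ∈ ordPartsOf m S, ∏ i, ev F y (π i) := by
  simp_rw [← ev_starPow F hF]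
  rfl

lemma ev_starExp_pos (F : CF E) (hF : F 0 = 0) {k : ℕ} (y : Fin k → E) (S : Finset (Fin k))
    (hS : 0 < S.card) :
    ev (starExp F) y S = ∑ m ∈ Icc 1 S.card, ((m.factorial : ℝ))⁻¹ *
      ∑ π ∈ ordPartsOf m S, ∏ i, ev F y (π i) := by
  rw [ev_starExp F hF, Finset.range_eq_Ico, Finset.sum_eq_sum_Ico_succ_bot (by omega),
    ordParts_zero, if_neg (by rintro rfl; simp at hS)]
  simp only [mul_zero, zero_add]
  rfl

lemma ev_starExp_empty (F : CF E) (hF : F 0 = 0) {k : ℕ} (y : Fin k → E) :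
    ev (starExp F) y ∅ = 1 := by
  rw [ev_starExp F hF]
  rw [Finset.card_empty, zero_add, Finset.sum_range_one, ordParts_zero]
  simp

lemma ordParts_one {k : ℕ} (S : Finset (Fin k)) (f : Finset (Fin k) → ℝ) (hf : f ∅ = 0) :
    ∑ π ∈ ordPartsOf 1 S, ∏ i, f (π i) = f S := by
  rw [ordParts_succ 0 S f hf]
  simp_rw [ordParts_zero]
  rw [Finset.sum_eq_single S]
  · simp
  · intro b hb hne
    rw [if_neg, mul_zero]
    intro h
    exact hne (Finset.Subset.antisymm (mem_powerset.1 hb) (Finset.sdiff_eq_empty_iff_subset.1 h))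
  · simp

lemma starExp_one (F : CF E) (hF : F 0 = 0) (x : Fin 1 → E) : starExp F 1 x = F 1 x := by
  have h0 : ev F x ∅ = 0 := congrFun hF (sub x ∅)
  rw [← ev_univ (starExp F), ev_starExp_pos F hF _ _ (by simp)]
  rw [Finset.card_fin, Finset.Icc_self, Finset.sum_singleton, ordParts_one _ _ h0, ev_univ]
  simp

lemma conv3 (A B C : CF E) {k : ℕ} (y : Fin k → E) :
    conv (conv A B) C k y =
      ∑ σ ∈ (Finset.univ :
              Finset (Finset (Fin k) × Finset (Fin k) × Finset (Fin k))).filter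
              (fun σ => Disjoint σ.1 σ.2.1 ∧ Disjoint σ.1 σ.2.2 ∧
                Disjoint σ.2.1 σ.2.2 ∧ σ.1 ∪ σ.2.1 ∪ σ.2.2 = Finset.univ),
        ev B y σ.1 * ev C y σ.2.1 * ev A y σ.2.2 := by
  rw [← ev_univ (conv _ _), ev_conv]
  simp_rw [ev_conv, Finset.sum_mul]
  rw [Finset.sum_sigma']
  refine Finset.sum_bij' (fun p _ => (p.1 \ p.2, univ \ p.1, p.2))
    (fun σ _ => ⟨σ.1 ∪ σ.2.2, σ.2.2⟩) ?_ ?_ ?_ ?_ ?_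
  · rintro ⟨I, J⟩ h
    simp only [mem_sigma, mem_powerset, mem_filter, mem_univ, true_and] at h ⊢
    have hJ := h.2
    simp only [Finset.disjoint_left, Finset.ext_iff, mem_sdiff, mem_union, mem_univ, true_and]
    refine ⟨?_, ?_, ?_, ?_⟩
    · tauto
    · tauto
    · intro a h1 h2; exact h1 (hJ h2)
    · intro a; tauto
  · rintro ⟨a, b, c⟩ h
    rw [mem_sigma, mem_powerset, mem_powerset]
    exact ⟨Finset.subset_univ _, Finset.subset_union_right⟩
  · rintro ⟨I, J⟩ h
    simp only [mem_sigma, mem_powerset] at h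
    simp [Finset.sdiff_union_of_subset h.2]
  · rintro ⟨a, b, c⟩ h
    simp only [mem_filter, mem_univ, true_and] at h
    obtain ⟨h1, h2, h3, h4⟩ := h
    simp only [Finset.disjoint_left, Finset.ext_iff, mem_union, mem_univ, iff_true] at h1 h2 h3 h4
    simp only [Prod.mk.injEq, and_true, Finset.ext_iff, mem_sdiff, mem_union, mem_univ, true_and]
    constructor
    · intro x; have := @h2 x; tauto
    · intro x; have := @h1 x; have := @h3 x; have := h4 x; tauto
  · rintro ⟨I, J⟩ h
    ring

end CF

open CF in
/-- Remark 3.2, eq. (3.9): recursion for the two-point kernels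
`ω_{(x₁,x₂)}`. -/
theorem twoPoint_kernel_recursion (E : Type) (ρ ρT ω : CF E) (x₁ x₂ : E)
    (hρ0 : ρ 0 = 1) (hρsymm : IsSymm ρ)
    (hρT0 : ρT 0 = 0) (hρTsymm : IsSymm ρT) (hρTexp : starExp ρT = ρ)
    (h1 : ρ 1 ![x₁] ≠ 0) (h2 : ρ 1 ![x₂] ≠ 0) (h12 : ρ 2 ![x₁, x₂] ≠ 0)
    (hω0 : ω 0 = 0) (hωsymm : IsSymm ω)
    (hω : (ρ 2 ![x₁, x₂])⁻¹ • D2 x₁ x₂ ρT =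
      conv (conv (starExp ω - ((ρ 1 ![x₁] * ρ 1 ![x₂]) / ρ 2 ![x₁, x₂]) • unit)
          ((ρ 1 ![x₁])⁻¹ • D x₁ ρT))
        ((ρ 1 ![x₂])⁻¹ • D x₂ ρT)) :
    ∀ (k : ℕ), 1 ≤ k → ∀ y : Fin k → E,
      ω k y =
        ρT (k + 2) (Fin.cons x₁ (Fin.cons x₂ y)) / ρ 2 ![x₁, x₂]
        - (ρT 2 ![x₁, x₂] / ρ 2 ![x₁, x₂]) *
            ∑ σ ∈ (Finset.univ : Finset (Finset (Fin k) × Finset (Fin k))).filter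
                (fun σ => Disjoint σ.1 σ.2 ∧ σ.1 ∪ σ.2 = Finset.univ),
              (ρT (σ.1.card + 1) (Fin.cons x₁ (sub y σ.1)) / ρ 1 ![x₁]) *
                (ρT (σ.2.card + 1) (Fin.cons x₂ (sub y σ.2)) / ρ 1 ![x₂])
        - ∑ σ ∈ (Finset.univ :
              Finset (Finset (Fin k) × Finset (Fin k) × Finset (Fin k))).filter
              (fun σ => Disjoint σ.1 σ.2.1 ∧ Disjoint σ.1 σ.2.2 ∧
                Disjoint σ.2.1 σ.2.2 ∧ σ.1 ∪ σ.2.1 ∪ σ.2.2 = Finset.univ ∧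
                0 < σ.2.2.card ∧ σ.2.2.card < k),
            (ρT (σ.1.card + 1) (Fin.cons x₁ (sub y σ.1)) / ρ 1 ![x₁]) *
              (ρT (σ.2.1.card + 1) (Fin.cons x₂ (sub y σ.2.1)) / ρ 1 ![x₂]) *
              ∑ l ∈ Finset.Icc 1 σ.2.2.card, ((l.factorial : ℝ))⁻¹ *
                ∑ π ∈ ordPartsOf l σ.2.2, ∏ i : Fin l, ω (π i).card (sub y (π i))
        - ∑ l ∈ Finset.Icc 2 k, ((l.factorial : ℝ))⁻¹ *
            ∑ π ∈ ordPartsOf l (Finset.univ : Finset (Fin k)),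
              ∏ i : Fin l, ω (π i).card (sub y (π i)) := by
  intro k hk y
  have hT1 : ∀ x : E, ρT 1 ![x] = ρ 1 ![x] := by
    intro x; rw [← hρTexp, starExp_one ρT hρT0]
  have hD : ∀ (x : E), ρ 1 ![x] ≠ 0 → ∀ {j : ℕ} (z : Fin j → E),
      ev ((ρ 1 ![x])⁻¹ • D x ρT) z ∅ = 1 := by
    intro x hx j z
    have : (D x ρT) 0 (sub z ∅) = ρ 1 ![x] := by
      rw [← hT1]
      unfold D
      congr 1
      funext i
      fin_cases i
      rfl
    change (ρ 1 ![x])⁻¹ * (D x ρT) 0 (sub z ∅) = 1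
    rw [this, inv_mul_cancel₀ hx]
  have hsw : ∀ {j : ℕ} (z : Fin j → E),
      D2 x₁ x₂ ρT j z = ρT (j + 2) (Fin.cons x₁ (Fin.cons x₂ z)) := by
    intro j z
    rw [← hρTsymm (j + 2) (Equiv.swap 0 1)]
    unfold D2 D
    congr 1
    funext i
    refine Fin.cases ?_ (fun i => Fin.cases ?_ (fun i => ?_) i) i
    · simp only [Function.comp, Equiv.swap_apply_left]
      rfl
    · have : (Fin.succ 0 : Fin (j + 2)) = 1 := rfl
      rw [this]
      simp only [Function.comp, Equiv.swap_apply_right]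
      rfl
    · have e : (Equiv.swap (0 : Fin (j + 2)) 1) i.succ.succ = i.succ.succ := by
        apply Equiv.swap_apply_of_ne_of_ne
        · exact Fin.succ_ne_zero _
        · intro h
          exact Fin.succ_ne_zero i (Fin.succ_injective _ h)
      simp only [Function.comp, e]
      rfl
  set A : CF E := starExp ω - ((ρ 1 ![x₁] * ρ 1 ![x₂]) / ρ 2 ![x₁, x₂]) • unit with hA
  have hAe : ∀ {j : ℕ} (z : Fin j → E),
      ev A z ∅ = 1 - (ρ 1 ![x₁] * ρ 1 ![x₂]) / ρ 2 ![x₁, x₂] := by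
    intro j z
    have e1 := ev_starExp_empty ω hω0 z
    have e2 := ev_unit z ∅
    rw [if_pos rfl] at e2
    have : ev A z ∅ = ev (starExp ω) z ∅
      - ((ρ 1 ![x₁] * ρ 1 ![x₂]) / ρ 2 ![x₁, x₂]) * ev unit z ∅ := rfl
    rw [this, e1, e2, mul_one]
  have hAn : ∀ (S : Finset (Fin k)), 0 < S.card → ev A y S =
      ∑ l ∈ Finset.Icc 1 S.card, ((l.factorial : ℝ))⁻¹ *
                ∑ π ∈ ordPartsOf l S, ∏ i : Fin l, ω (π i).card (sub y (π i)) := by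
    intro S hS
    have e1 := ev_starExp_pos ω hω0 y S hS
    have e2 := ev_unit y S
    rw [if_neg (by rintro rfl; simp at hS)] at e2
    have : ev A y S = ev (starExp ω) y S
      - ((ρ 1 ![x₁] * ρ 1 ![x₂]) / ρ 2 ![x₁, x₂]) * ev unit y S := rfl
    rw [this, e1, e2, mul_zero, sub_zero]
    rfl
  set B : CF E := (ρ 1 ![x₁])⁻¹ • D x₁ ρT with hB
  set C : CF E := (ρ 1 ![x₂])⁻¹ • D x₂ ρT with hC
  have hBS : ∀ S : Finset (Fin k), ev B y S =
      ρT (S.card + 1) (Fin.cons x₁ (sub y S)) / ρ 1 ![x₁] := by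
    intro S
    rw [div_eq_inv_mul]; rfl
  have hCS : ∀ S : Finset (Fin k), ev C y S =
      ρT (S.card + 1) (Fin.cons x₂ (sub y S)) / ρ 1 ![x₂] := by
    intro S
    rw [div_eq_inv_mul]; rfl
  have hA0 : ev A y ∅ = ρT 2 ![x₁, x₂] / ρ 2 ![x₁, x₂] := by
    have e := congrFun (congrFun hω 0) ![]
    rw [← ev_univ (conv _ _), ev_conv] at e
    have hu : (univ : Finset (Fin 0)) = ∅ := rfl
    simp only [hu, powerset_empty, sum_singleton, ev_conv, Finset.sdiff_self, hAe,
      hD x₁ h1, hD x₂ h2, hB, hC, mul_one] at e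
    rw [hAe, ← e, div_eq_inv_mul]
    change (ρ 2 ![x₁, x₂])⁻¹ * D2 x₁ x₂ ρT 0 ![] = _
    rw [hsw]
    rfl
  have key := congrFun (congrFun hω k) y
  rw [conv3] at key
  have hsm : ((ρ 2 ![x₁, x₂])⁻¹ • D2 x₁ x₂ ρT) k y =
      ρT (k + 2) (Fin.cons x₁ (Fin.cons x₂ y)) / ρ 2 ![x₁, x₂] := by
    rw [div_eq_inv_mul, ← hsw]; rfl
  rw [hsm] at key
  rw [key]
  simp only [← hBS, ← hCS]
  have hk0 : k ≠ 0 := by omega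
  -- the top part
  have htop : ev A y univ = ω k y + ∑ l ∈ Finset.Icc 2 k, ((l.factorial : ℝ))⁻¹ *
            ∑ π ∈ ordPartsOf l (Finset.univ : Finset (Fin k)),
              ∏ i : Fin l, ω (π i).card (sub y (π i)) := by
    rw [hAn _ (by simp; omega), Finset.card_fin]
    have h0 : ev ω y ∅ = 0 := congrFun hω0 (sub y ∅)
    have e1 := ordParts_one univ (ev ω y) h0
    rw [ev_univ] at e1
    rw [← Finset.insert_Icc_add_one_left_eq_Icc hk, Finset.sum_insert (by simp)]
    congr 1
    rw [← e1]
    simp [ev]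
  rw [← Finset.sum_filter_add_sum_filter_not _ (fun σ => 0 < σ.2.2.card ∧ σ.2.2.card < k)]
  rw [Finset.filter_filter]
  simp only [and_assoc]
  have hmid : ∀ σ ∈ (Finset.univ :
              Finset (Finset (Fin k) × Finset (Fin k) × Finset (Fin k))).filter
              (fun σ => Disjoint σ.1 σ.2.1 ∧ Disjoint σ.1 σ.2.2 ∧
                Disjoint σ.2.1 σ.2.2 ∧ σ.1 ∪ σ.2.1 ∪ σ.2.2 = Finset.univ ∧
                0 < σ.2.2.card ∧ σ.2.2.card < k),
      ev B y σ.1 * ev C y σ.2.1 * ev A y σ.2.2 = ev B y σ.1 * ev C y σ.2.1 *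
              ∑ l ∈ Finset.Icc 1 σ.2.2.card, ((l.factorial : ℝ))⁻¹ *
                ∑ π ∈ ordPartsOf l σ.2.2, ∏ i : Fin l, ω (π i).card (sub y (π i)) := by
    intro σ hσ
    simp only [mem_filter] at hσ
    rw [hAn _ hσ.2.2.2.2.2.1]
  rw [Finset.sum_congr rfl hmid]
  have hends : ∑ σ ∈ ((Finset.univ :
              Finset (Finset (Fin k) × Finset (Fin k) × Finset (Fin k))).filter
              (fun σ => Disjoint σ.1 σ.2.1 ∧ Disjoint σ.1 σ.2.2 ∧
                Disjoint σ.2.1 σ.2.2 ∧ σ.1 ∪ σ.2.1 ∪ σ.2.2 = Finset.univ)).filter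
                (fun σ => ¬ (0 < σ.2.2.card ∧ σ.2.2.card < k)),
      ev B y σ.1 * ev C y σ.2.1 * ev A y σ.2.2 = ev A y univ + ev A y ∅ *
      ∑ σ ∈ (Finset.univ : Finset (Finset (Fin k) × Finset (Fin k))).filter
                (fun σ => Disjoint σ.1 σ.2 ∧ σ.1 ∪ σ.2 = Finset.univ),
              ev B y σ.1 * ev C y σ.2 := by
    have hset : ((Finset.univ :
              Finset (Finset (Fin k) × Finset (Fin k) × Finset (Fin k))).filter
              (fun σ => Disjoint σ.1 σ.2.1 ∧ Disjoint σ.1 σ.2.2 ∧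
                Disjoint σ.2.1 σ.2.2 ∧ σ.1 ∪ σ.2.1 ∪ σ.2.2 = Finset.univ)).filter
                (fun σ => ¬ (0 < σ.2.2.card ∧ σ.2.2.card < k)) =
        insert (∅, ∅, univ) (((Finset.univ : Finset (Finset (Fin k) × Finset (Fin k))).filter
                (fun σ => Disjoint σ.1 σ.2 ∧ σ.1 ∪ σ.2 = Finset.univ)).image
                  (fun σ => (σ.1, σ.2, ∅))) := by
      ext ⟨a, b, c⟩
      simp only [mem_filter, mem_univ, true_and, mem_insert, mem_image, Prod.exists,
        Prod.mk.injEq]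
      constructor
      · rintro ⟨⟨g1, g2, g3, g4⟩, g5⟩
        by_cases hc : c = ∅
        · right
          subst hc
          exact ⟨a, b, ⟨g1, by simpa using g4⟩, rfl, rfl, rfl⟩
        · left
          have hcp : 0 < c.card := Finset.card_pos.2 (Finset.nonempty_iff_ne_empty.2 hc)
          have hck : c.card = Fintype.card (Fin k) := by
            have := Finset.card_le_univ c
            simp only [Fintype.card_fin] at this ⊢
            by_contra hne
            exact g5 ⟨hcp, by omega⟩
          have hcu : c = univ := (Finset.card_eq_iff_eq_univ c).1 hck
          subst hcu
          refine ⟨?_, ?_, rfl⟩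
          · simpa [Finset.disjoint_left, Finset.eq_empty_iff_forall_notMem] using g2
          · simpa [Finset.disjoint_left, Finset.eq_empty_iff_forall_notMem] using g3
      · rintro (⟨rfl, rfl, rfl⟩ | ⟨a', b', ⟨g1, g2⟩, rfl, rfl, rfl⟩)
        · simp
        · simp [g1, g2]
    rw [hset, Finset.sum_insert, Finset.sum_image]
    · rw [hD x₁ h1, hD x₂ h2, Finset.mul_sum]
      simp only [one_mul]
      congr 1
      apply Finset.sum_congr rfl
      intro σ _
      ring
    · rintro ⟨a, b⟩ _ ⟨a', b'⟩ _ h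
      simpa using h
    · simp only [mem_image, not_exists, not_and, Prod.mk.injEq]
      intro x _ _ _ h
      have := congrArg Finset.card h
      simp at this
      omega
  rw [hends, htop, hA0]
  ring
end
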